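/- The single-layer operator T : H̃^{-1/2}(Γ) → H^{1/2}(Γ) with kernel e^{ik|x−y|}/(4π|x−y|) is a Fredholm operator of index zero. -/

import Mathlib

noncomputable section

open MeasureTheory Complex Filter Topology
open scoped Real NNReal ContDiff

/-- The plane `ℝ²`. -/
abbrev R2 : Type := EuclideanSpace ℝ (Fin 2)

/-- Euclidean dot product on `ℝ²`. -/
def rdot (x ξ : R2) : ℝ := x 0 * ξ 0 + x 1 * ξ 1

/-- `testFT φ ξ = ∫ e^{i x·ξ} φ(x) dx`, the (inverse-type) Fourier integral of a
test function `φ`. -/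
def testFT (φ : R2 → ℂ) (ξ : R2) : ℂ :=
  ∫ x : R2, Complex.exp (Complex.I * (rdot x ξ : ℂ)) * φ x

/-- The squared `H^s(ℝ²)` norm of the distribution whose Fourier transform is `F`:
`‖f‖² = (2π)⁻² ∫ (1+|ξ|²)^s |f̂(ξ)|² dξ`. -/
def wnormSq (s : ℝ) (F : R2 → ℂ) : ℝ :=
  ((2 * π) ^ 2)⁻¹ * ∫ ξ : R2, ((1 : ℝ) + ‖ξ‖ ^ 2) ^ s * ‖F ξ‖ ^ 2

/-- The `H^s(ℝ²)` norm (Fourier-side representation). -/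
def wnorm (s : ℝ) (F : R2 → ℂ) : ℝ := Real.sqrt (wnormSq s F)

/-- `F` is the Fourier transform of an element of `H^s(ℝ²)`. -/
def MemHs (s : ℝ) (F : R2 → ℂ) : Prop :=
  AEStronglyMeasurable F (volume : Measure R2) ∧
    Integrable (fun ξ : R2 => ((1 : ℝ) + ‖ξ‖ ^ 2) ^ s * ‖F ξ‖ ^ 2) volume

/-- An element `f` of `H̃^s(Γ)`: a distribution on `ℝ²` of Sobolev regularity `s`
supported in the closure of `Γ`, represented by its Fourier transform `ft`
(a continuous function, `f` being a compactly supported distribution).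
The support condition is expressed by testing against smooth compactly supported
functions `φ` whose support avoids `closure Γ`, via the Parseval pairing
`∫ f φ dx = (2π)⁻² ∫ f̂(ξ) φ̌(ξ) dξ` with `φ̌(ξ) = ∫ e^{ix·ξ} φ(x) dx`. -/
structure HTildeElt (s : ℝ) (Γ : Set R2) where
  ft : R2 → ℂ
  cont : Continuous ft
  mem : Integrable (fun ξ : R2 => ((1 : ℝ) + ‖ξ‖ ^ 2) ^ s * ‖ft ξ‖ ^ 2) volume
  supp : ∀ φ : R2 → ℂ, ContDiff ℝ ∞ φ → HasCompactSupport φ →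
    tsupport φ ∩ closure Γ = ∅ → (∫ ξ : R2, ft ξ * testFT φ ξ) = 0

/-- `Γ` is a bounded Lipschitz domain in `ℝ²`: a nonempty bounded open set whose
boundary is locally, after a rigid motion, the graph of a Lipschitz function with
the domain on one side. -/
def IsLipschitzDomain (Γ : Set R2) : Prop :=
  IsOpen Γ ∧ Bornology.IsBounded Γ ∧ Γ.Nonempty ∧
    ∀ x ∈ frontier Γ, ∃ (e : R2 ≃ₗᵢ[ℝ] R2) (L : ℝ≥0) (f : ℝ → ℝ) (U : Set R2),
      LipschitzWith L f ∧ IsOpen U ∧ x ∈ U ∧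
        ∀ y ∈ U, (y ∈ Γ ↔ f (e y 0) < e y 1)

/-- `ξ·V̂(ξ)`, i.e. `-i` times the Fourier transform of `div V`. -/
def dotFt (F1 F2 : R2 → ℂ) (ξ : R2) : ℂ := (ξ 0 : ℂ) * F1 ξ + (ξ 1 : ℂ) * F2 ξ

/-- `ξ⊥·V̂(ξ)`, i.e. `-i` times the Fourier transform of `curl V`. -/
def curlFt (F1 F2 : R2 → ℂ) (ξ : R2) : ℂ := (ξ 1 : ℂ) * F1 ξ - (ξ 0 : ℂ) * F2 ξ

/-- An element of `X = H̃^{-1/2}_div(Γ)`: a pair of elements of `H̃^{-1/2}(Γ)`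
whose distributional divergence also belongs to `H̃^{-1/2}(Γ)`. -/
structure Xelt (Γ : Set R2) where
  c1 : HTildeElt (-(1/2) : ℝ) Γ
  c2 : HTildeElt (-(1/2) : ℝ) Γ
  divMem : Integrable (fun ξ : R2 =>
    ((1 : ℝ) + ‖ξ‖ ^ 2) ^ (-(1/2) : ℝ) * ‖dotFt c1.ft c2.ft ξ‖ ^ 2) volume

/-- The Fourier transform of `div V`. -/
def divFt {Γ : Set R2} (V : Xelt Γ) (ξ : R2) : ℂ :=
  Complex.I * dotFt V.c1.ft V.c2.ft ξ

/-- The squared `H`-norm `‖V‖²_H` of a vector field. -/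
def HnormSq {Γ : Set R2} (V : Xelt Γ) : ℝ :=
  wnormSq (-(1/2)) V.c1.ft + wnormSq (-(1/2)) V.c2.ft

/-- The squared `X`-norm `‖V‖²_X = ‖V‖²_H + ‖div V‖²_{H̃^{-1/2}}`. -/
def XnormSq {Γ : Set R2} (V : Xelt Γ) : ℝ :=
  HnormSq V + wnormSq (-(1/2)) (divFt V)

/-- The `X`-norm. -/
def Xnorm {Γ : Set R2} (V : Xelt Γ) : ℝ := Real.sqrt (XnormSq V)

/-- `ĝ₀(ξ) = i/√(k²-|ξ|²)`, with the branch `√(k²-|ξ|²) = i√(|ξ|²-k²)` for `|ξ| > k`. -/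
def g0hat (k : ℝ) (ξ : R2) : ℂ :=
  if ‖ξ‖ < k then Complex.I / ((Real.sqrt (k ^ 2 - ‖ξ‖ ^ 2) : ℝ) : ℂ)
  else 1 / ((Real.sqrt (‖ξ‖ ^ 2 - k ^ 2) : ℝ) : ℂ)

/-- The integrand of the sesquilinear form `B`:
`ĝ₀(ξ) [ (|ξ|²-k²) a₁ b̄₁ - k² a₂ b̄₂ ]` with `a₁ = ξ·Ŵ/|ξ|`, `a₂ = ξ⊥·Ŵ/|ξ|`, etc. -/
def Bintegrand (k : ℝ) (F1 F2 G1 G2 : R2 → ℂ) (ξ : R2) : ℂ :=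
  g0hat k ξ *
    (((‖ξ‖ ^ 2 - k ^ 2 : ℝ) : ℂ) * (dotFt F1 F2 ξ * starRingEnd ℂ (dotFt G1 G2 ξ)) -
      ((k ^ 2 : ℝ) : ℂ) * (curlFt F1 F2 ξ * starRingEnd ℂ (curlFt G1 G2 ξ))) /
    ((‖ξ‖ ^ 2 : ℝ) : ℂ)

/-- The sesquilinear form `B(W,V)`. -/
def Bform (k : ℝ) {Γ : Set R2} (W V : Xelt Γ) : ℂ :=
  ∫ ξ : R2, Bintegrand k W.c1.ft W.c2.ft V.c1.ft V.c2.ft ξ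

/-- The sesquilinear form `E(q,V) = B(curl⃗ q, V)`, where
`curl⃗ q = (∂q/∂x₂, -∂q/∂x₁)` has Fourier transform `(iξ₂ q̂, -iξ₁ q̂)`. -/
def Eform (k : ℝ) {Γ : Set R2} (q : HTildeElt (1/2 : ℝ) Γ) (V : Xelt Γ) : ℂ :=
  ∫ ξ : R2, Bintegrand k (fun η => Complex.I * (η 1 : ℂ) * q.ft η)
      (fun η => -(Complex.I * (η 0 : ℂ) * q.ft η)) V.c1.ft V.c2.ft ξ

/-- The inner product of the Hilbert space `X`; by the Riesz representation
theorem, every bounded conjugate-linear functional on `X` is `V ↦ Xinner Y V`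
for a unique `Y ∈ X`, with functional norm `Xnorm Y`. -/
def Xinner {Γ : Set R2} (Y V : Xelt Γ) : ℂ :=
  ((((2 * π) ^ 2)⁻¹ : ℝ) : ℂ) * ∫ ξ : R2, ((((1 : ℝ) + ‖ξ‖ ^ 2) ^ (-(1/2) : ℝ) : ℝ) : ℂ) *
    (Y.c1.ft ξ * starRingEnd ℂ (V.c1.ft ξ) + Y.c2.ft ξ * starRingEnd ℂ (V.c2.ft ξ) +
      divFt Y ξ * starRingEnd ℂ (divFt V ξ))

/-- `√(k²-|ξ|²)`, with the branch `i√(|ξ|²-k²)` for `|ξ| > k`. -/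
def rootk (k : ℝ) (ξ : R2) : ℂ :=
  if ‖ξ‖ < k then ((Real.sqrt (k ^ 2 - ‖ξ‖ ^ 2) : ℝ) : ℂ)
  else Complex.I * ((Real.sqrt (‖ξ‖ ^ 2 - k ^ 2) : ℝ) : ℂ)

/-- The Fourier multiplier `i/(2√(k²-|ξ|²))` of the Helmholtz single-layer
operator `T` with kernel `e^{ik|x-y|}/(4π|x-y|)`. -/
def mT (k : ℝ) (ξ : R2) : ℂ := Complex.I / (2 * rootk k ξ)

/-- The Fourier multiplier `1/(2|ξ|)` of the Laplace single-layer operator `T₀`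
with kernel `1/(4π|x-y|)`. -/
def mT0 (ξ : R2) : ℂ := 1 / (2 * ((‖ξ‖ : ℝ) : ℂ))

/-- The Fourier multiplier of `R = T - T₀`. -/
def mR (k : ℝ) (ξ : R2) : ℂ := mT k ξ - mT0 ξ

/-- The distributions with Fourier data `G` and `E` have the same restriction to
the open set `Γ`: `⟨G - E, φ⟩ = 0` for all smooth `φ` compactly supported in `Γ`
(pairing written on the Fourier side). -/
def AgreeOn (Γ : Set R2) (G E : R2 → ℂ) : Prop :=
  ∀ φ : R2 → ℂ, ContDiff ℝ ∞ φ → HasCompactSupport φ → tsupport φ ⊆ Γ →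
    (∫ ξ : R2, (G ξ - E ξ) * testFT φ ξ) = 0

/-- The duality pairing `⟨f, ψ⟩` between `H^{1/2}(Γ)` and `H̃^{-1/2}(Γ)`, written
on the Fourier side (Plancherel): `(2π)⁻² ∫ f̂(ξ) conj(ψ̂(ξ)) dξ`, where `G = f̂`
is the Fourier data of (an extension of) `f`. -/
def dualPair (G ψ : R2 → ℂ) : ℂ :=
  ((((2 * π) ^ 2)⁻¹ : ℝ) : ℂ) * ∫ ξ : R2, G ξ * starRingEnd ℂ (ψ ξ)

/-!
The Fourier transform, weighted by `⟨ξ⟩^{-s}`, identifies `H̃^{-s}(Γ)` with a closed subspace of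
`L²(ℝ²)`: the orthogonal complement of the weighted transforms of the test functions supported
away from the closure of `Γ`. Under this identification the operator with multiplier `M` becomes
the compression of the multiplication by `⟨ξ⟩^{2s} M(ξ)` to that subspace. If this function tends
to `c ≠ 0` at infinity, it is close to `c` outside a compact set `K`, so that the compression of
the multiplication by its value off `K` and by `c` on `K` is invertible. The difference is an
integral over `K` of rank-one operators, because for bounded `Γ` the transforms of elements of
`H̃^{-s}(Γ)` can be evaluated at single frequencies; it is therefore a norm limit of operators of
finite rank, and the Fredholm alternative holds.

To return from the model to restrictions to `Γ`, the functionals given by test functions supported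
in `Γ` must separate the points of `H̃^{-s}(Γ)`. This is where the geometry of `Γ` enters: by the
segment property, elements can be localized, translated into `Γ` and mollified.
-/

open scoped ComplexConjugate InnerProductSpace FourierTransform

section FredholmIndex

section Algebra

variable {R V W : Type*} [Ring R] [AddCommGroup V] [Module R V] [AddCommGroup W] [Module R W]

/-- `ker (1 + i g)` and `ker (1 + g i)` are isomorphic, through `g` and `-i`. -/
def kerIdAddCompEquiv (i : W →ₗ[R] V) (g : V →ₗ[R] W) :
    (LinearMap.id + i ∘ₗ g).ker ≃ₗ[R] (LinearMap.id + g ∘ₗ i).ker :=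
  have hg (x : V) (hx : x ∈ (LinearMap.id + i ∘ₗ g).ker) : g x ∈ (LinearMap.id + g ∘ₗ i).ker := by
    simpa using congrArg g (LinearMap.mem_ker.1 hx)
  have hi (y : W) (hy : y ∈ (LinearMap.id + g ∘ₗ i).ker) :
      (-i) y ∈ (LinearMap.id + i ∘ₗ g).ker := by
    exact neg_mem (by simpa using congrArg i (LinearMap.mem_ker.1 hy))
  .ofLinearMap (g.restrict hg) ((-i).restrict hi)
    (LinearMap.ext fun y => Subtype.ext <| by
      simpa using (eq_neg_of_add_eq_zero_left (LinearMap.mem_ker.1 y.2)).symm)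
    (LinearMap.ext fun x => Subtype.ext <| by
      simpa using (eq_neg_of_add_eq_zero_left (LinearMap.mem_ker.1 x.2)).symm)

/-- The cokernels of `1 + g i` and `1 + i g` are isomorphic, through `i` and `-g`. -/
def cokerIdAddCompEquiv (i : W →ₗ[R] V) (g : V →ₗ[R] W) :
    (W ⧸ (LinearMap.id + g ∘ₗ i).range) ≃ₗ[R] (V ⧸ (LinearMap.id + i ∘ₗ g).range) :=
  .ofLinearMap
    (Submodule.mapQ _ _ i (by rintro _ ⟨w, rfl⟩; exact ⟨i w, by simp⟩))
    (Submodule.mapQ _ _ (-g) (by rintro _ ⟨v, rfl⟩; exact ⟨-g v, by simp [add_comm]⟩))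
    (Submodule.linearMap_qext _ <| LinearMap.ext fun v =>
      (Submodule.Quotient.eq _).2 ⟨-v, by simp; abel⟩)
    (Submodule.linearMap_qext _ <| LinearMap.ext fun w =>
      (Submodule.Quotient.eq _).2 ⟨-w, by simp; abel⟩)

end Algebra

lemma finrank_ker_id_add_eq_finrank_coker {K V : Type*} [Field K] [AddCommGroup V] [Module K V]
    {G : V →ₗ[K] V} (hG : G.HasFiniteRange) :
    Module.finrank K (LinearMap.id + G).ker =
      Module.finrank K (V ⧸ (LinearMap.id + G).range) := by
  have : FiniteDimensional K G.range := .of_fg hG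
  set L : G.range →ₗ[K] G.range := LinearMap.id + G.rangeRestrict ∘ₗ G.range.subtype
  have hker := (kerIdAddCompEquiv G.range.subtype G.rangeRestrict).finrank_eq
  have hcoker := (cokerIdAddCompEquiv G.range.subtype G.rangeRestrict).finrank_eq
  have hfin := L.finrank_range_add_finrank_ker.trans
    (Submodule.finrank_quotient_add_finrank L.range).symm
  rw [LinearMap.subtype_comp_codRestrict] at hker hcoker
  rw [hker, ← hcoker]
  exact Nat.add_left_cancel (hfin.trans (add_comm _ _))

section FiniteRank

variable {𝕜 : Type*} [RCLike 𝕜]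

/-- The space of continuous linear maps with finite-dimensional range. -/
def finiteRankOperators (𝕜 E F : Type*) [RCLike 𝕜] [NormedAddCommGroup E] [NormedSpace 𝕜 E]
    [NormedAddCommGroup F] [NormedSpace 𝕜 F] : Submodule 𝕜 (E →L[𝕜] F) :=
  (LinearMap.finiteRange 𝕜 E F).comap (ContinuousLinearMap.coeLM 𝕜)

variable {E F : Type*} [NormedAddCommGroup E] [NormedSpace 𝕜 E]
  [NormedAddCommGroup F] [NormedSpace 𝕜 F]

lemma mem_finiteRankOperators {T : E →L[𝕜] F} :
    T ∈ finiteRankOperators 𝕜 E F ↔ (T : E →ₗ[𝕜] F).HasFiniteRange :=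
  LinearMap.mem_finiteRange_iff_hasFiniteRange

open scoped LinearMap.FiniteRangeSetoid in
lemma isFredholm_of_isUnit_sub {A T : E →L[𝕜] E} (hT : T ∈ finiteRankOperators 𝕜 E E)
    (hAT : IsUnit (A - T)) : A.IsFredholm := by
  obtain ⟨b, hb⟩ := hAT
  have hbA : ((ContinuousLinearEquiv.ofUnit b).toLinearEquiv : E →ₗ[𝕜] E) ≈ A := by
    rw [LinearMap.FiniteRangeSetoid.equiv_iff_hasFiniteRange]
    have : (b : E →L[𝕜] E) - A = -T := by rw [hb]; abel
    have hneg := (mem_finiteRankOperators.1 hT).neg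
    rwa [← ContinuousLinearMap.toLinearMap_neg, ← this] at hneg
  exact .of_isQuasiInverse (v := (ContinuousLinearEquiv.ofUnit b).symm)
    ((LinearEquiv.isQuasiInverse _).congr (Setoid.refl _) (Setoid.symm hbA))

lemma finrank_ker_eq_finrank_coker_of_isUnit_sub {A T : E →L[𝕜] E}
    (hT : T ∈ finiteRankOperators 𝕜 E E) (hAT : IsUnit (A - T)) :
    Module.finrank 𝕜 A.ker = Module.finrank 𝕜 (E ⧸ A.range) := by
  obtain ⟨b, hb⟩ := hAT
  set β : E ≃ₗ[𝕜] E := (ContinuousLinearEquiv.ofUnit b).toLinearEquiv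
  set G : E →ₗ[𝕜] E := β.symm ∘ₗ (T : E →ₗ[𝕜] E)
  have hA : (A : E →ₗ[𝕜] E) = β ∘ₗ (LinearMap.id + G) := by
    ext x
    have : β x = A x - T x := congrArg (fun S : E →L[𝕜] E => S x) hb
    simp [G, this]
  have hG : G.HasFiniteRange := (mem_finiteRankOperators.1 hT).comp_left _
  change Module.finrank 𝕜 (A : E →ₗ[𝕜] E).ker = Module.finrank 𝕜 (E ⧸ (A : E →ₗ[𝕜] E).range)
  rw [hA, LinearEquiv.ker_comp, finrank_ker_id_add_eq_finrank_coker hG]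
  exact (Submodule.Quotient.equiv _ _ β (LinearMap.range_comp _ _).symm).finrank_eq

lemma exists_finiteRank_isUnit_sub [CompleteSpace E] {A R : E →L[𝕜] E} (hA : IsUnit (A - R))
    (hR : R ∈ (finiteRankOperators 𝕜 E E).topologicalClosure) :
    ∃ T ∈ finiteRankOperators 𝕜 E E, IsUnit (A - T) := by
  have hopen : IsOpen {T : E →L[𝕜] E | IsUnit (A - T)} :=
    Units.isOpen.preimage (continuous_const.sub continuous_id)
  obtain ⟨T, hAT, hT⟩ := mem_closure_iff.1 hR _ hopen hA
  exact ⟨T, hT, hAT⟩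

end FiniteRank

section Hilbert

variable {𝕜 E : Type*} [RCLike 𝕜] [NormedAddCommGroup E] [InnerProductSpace 𝕜 E]

lemma exists_basis_of_finrank_eq {V : Type*} [AddCommGroup V] [Module 𝕜 V] (K : Submodule 𝕜 V)
    [FiniteDimensional 𝕜 K] {n : ℕ} (hn : Module.finrank 𝕜 K = n) :
    ∃ e : Fin n → V, LinearIndependent 𝕜 e ∧ Submodule.span 𝕜 (Set.range e) = K := by
  let e := Module.finBasisOfFinrankEq 𝕜 K hn
  refine ⟨fun i => e i, e.linearIndependent.map' K.subtype (Submodule.ker_subtype _), ?_⟩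
  have := congrArg (Submodule.map K.subtype) e.span_eq
  rwa [Submodule.map_span, ← Set.range_comp, Submodule.map_top, Submodule.range_subtype] at this

variable [CompleteSpace E]

/-- A bounded operator is Fredholm of index zero in the form of the Fredholm alternative: bases
`e` of `ker A` and `e'` of `ker A†` of the same finite size, and `range A = (ker A†)ᗮ`. -/
def FredholmAlternative (A : E →L[𝕜] E) {n : ℕ} (e e' : Fin n → E) : Prop :=
  (LinearIndependent 𝕜 e ∧ Submodule.span 𝕜 (Set.range e) = A.ker) ∧
  (LinearIndependent 𝕜 e' ∧ Submodule.span 𝕜 (Set.range e') = A.adjoint.ker) ∧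
  ∀ f, f ∈ A.range ↔ ∀ i, ⟪e' i, f⟫_𝕜 = 0

theorem exists_fredholmAlternative {A R : E →L[𝕜] E} (hA : IsUnit (A - R))
    (hR : R ∈ (finiteRankOperators 𝕜 E E).topologicalClosure) :
    ∃ (n : ℕ) (e e' : Fin n → E), FredholmAlternative A e e' := by
  obtain ⟨T, hT, hAT⟩ := exists_finiteRank_isUnit_sub hA hR
  have hFred := isFredholm_of_isUnit_sub hT hAT
  have := hFred.finite_ker
  have : FiniteDimensional 𝕜 (E ⧸ A.range) := hFred.finite_coker
  have : CompleteSpace A.range := hFred.isClosed_range.completeSpace_coe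
  let q : (E ⧸ A.range) ≃ₗ[𝕜] A.adjoint.ker :=
    (Submodule.quotientEquivOfIsCompl _ _ (Submodule.isCompl_orthogonal _)).trans
      (LinearEquiv.ofEq _ _ A.orthogonal_range)
  have := q.finiteDimensional
  obtain ⟨e, he⟩ := exists_basis_of_finrank_eq A.ker rfl
  obtain ⟨e', he'⟩ := exists_basis_of_finrank_eq A.adjoint.ker
    (q.finrank_eq.symm.trans (finrank_ker_eq_finrank_coker_of_isUnit_sub hT hAT).symm)
  refine ⟨_, e, e', he, he', fun f => ?_⟩
  rw [← Submodule.orthogonal_orthogonal A.range, A.orthogonal_range, ← he'.2,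
    ← Submodule.span_singleton_le_iff_mem, ← Submodule.isOrtho_iff_le, Submodule.isOrtho_comm,
    Submodule.isOrtho_span]
  simp

end Hilbert

end FredholmIndex

/-! ### Plane waves and test functions -/

/-- The plane wave `x ↦ e^{i x·ξ}` of frequency `ξ`, the kernel of `testFT`. -/
def planeWave (x ξ : R2) : ℂ := Complex.exp (Complex.I * (rdot x ξ : ℂ))

lemma rdot_eq_inner (x ξ : R2) : rdot x ξ = ⟪x, ξ⟫_ℝ := by
  simp [rdot, PiLp.inner_apply, Fin.sum_univ_two, mul_comm]

lemma norm_planeWave (x ξ : R2) : ‖planeWave x ξ‖ = 1 := by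
  rw [planeWave, mul_comm]
  exact Complex.norm_exp_ofReal_mul_I _

lemma planeWave_comm (x ξ : R2) : planeWave x ξ = planeWave ξ x := by
  simp only [planeWave, rdot_eq_inner, real_inner_comm]

lemma planeWave_add_left (x y ξ : R2) :
    planeWave (x + y) ξ = planeWave x ξ * planeWave y ξ := by
  simp only [planeWave, rdot_eq_inner, inner_add_left, ofReal_add, mul_add, Complex.exp_add]

lemma planeWave_add_right (x ξ η : R2) :
    planeWave x (ξ + η) = planeWave x ξ * planeWave x η := by
  simp only [planeWave_comm x, planeWave_add_left]

lemma planeWave_neg_left (x ξ : R2) : planeWave (-x) ξ = conj (planeWave x ξ) := by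
  simp [planeWave, rdot_eq_inner, ← Complex.exp_conj]

lemma planeWave_neg_right (x ξ : R2) : planeWave x (-ξ) = conj (planeWave x ξ) := by
  rw [planeWave_comm, planeWave_neg_left, planeWave_comm]

lemma planeWave_zero_left (ξ : R2) : planeWave 0 ξ = 1 := by simp [planeWave, rdot_eq_inner]

@[fun_prop]
lemma continuous_planeWave {X : Type*} [TopologicalSpace X] {f g : X → R2} (hf : Continuous f)
    (hg : Continuous g) : Continuous fun x => planeWave (f x) (g x) := by
  simp only [planeWave, rdot_eq_inner]
  fun_prop

lemma testFT_eq_integral_planeWave (φ : R2 → ℂ) (ξ : R2) :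
    testFT φ ξ = ∫ x, planeWave x ξ * φ x := rfl

lemma testFT_eq_fourierInv (φ : R2 → ℂ) (ξ : R2) : testFT φ ξ = 𝓕⁻ φ ((2 * π)⁻¹ • ξ) := by
  rw [testFT, Real.fourierInv_eq']
  congr 1 with x
  rw [smul_eq_mul, rdot_eq_inner, inner_smul_right]
  congr 2
  push_cast
  field_simp

/-- The Fourier integral `(2π)⁻² ∫ e^{-i x·ξ} G(ξ) dξ`, inverse to `testFT`. -/
def invTestFT (G : R2 → ℂ) (x : R2) : ℂ := ((((2 * π) ^ 2)⁻¹ : ℝ) : ℂ) * testFT G (-x)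

lemma invTestFT_eq_fourier (G : R2 → ℂ) (x : R2) :
    invTestFT G x = 𝓕 (fun v => G ((2 * π) • v)) x := by
  have h := Measure.integral_comp_smul (volume : Measure R2)
    (fun ξ => planeWave ξ (-x) * G ξ) (2 * π)
  rw [finrank_euclideanSpace_fin, abs_of_pos (by positivity), Complex.real_smul] at h
  rw [invTestFT, testFT_eq_integral_planeWave, ← h, Real.fourier_eq']
  congr 1 with v
  rw [smul_eq_mul, planeWave, rdot_eq_inner, real_inner_smul_left, inner_neg_right]
  congr 2
  push_cast
  ring

lemma integrable_planeWave_mul {f : R2 → ℂ} (hf : Integrable f) (ξ : R2) :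
    Integrable fun x => planeWave x ξ * f x :=
  hf.bdd_mul (c := 1) (by fun_prop) (by simp [norm_planeWave])

lemma norm_testFT_le (f : R2 → ℂ) (ξ : R2) : ‖testFT f ξ‖ ≤ ∫ x, ‖f x‖ := by
  refine (norm_integral_le_integral_norm fun x => planeWave x ξ * f x).trans_eq ?_
  simp only [norm_mul, norm_planeWave, one_mul]

lemma testFT_sub {f g : R2 → ℂ} (hf : Integrable f) (hg : Integrable g) (ξ : R2) :
    testFT (fun x => f x - g x) ξ = testFT f ξ - testFT g ξ := by
  simp only [testFT_eq_integral_planeWave, mul_sub]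
  exact integral_sub (integrable_planeWave_mul hf ξ) (integrable_planeWave_mul hg ξ)

lemma testFT_comp_sub_right (f : R2 → ℂ) (a ξ : R2) :
    testFT (fun x => f (x - a)) ξ = planeWave a ξ * testFT f ξ := by
  simp only [testFT_eq_integral_planeWave]
  rw [← integral_const_mul, ← integral_add_right_eq_self (fun x => planeWave x ξ * f (x - a)) a]
  congr 1 with x
  rw [add_sub_cancel_right, planeWave_add_left]
  ring

lemma testFT_conj (f : R2 → ℂ) (ξ : R2) :
    testFT (fun x => conj (f x)) ξ = conj (testFT f (-ξ)) := by
  simp only [testFT_eq_integral_planeWave, ← integral_conj, map_mul, planeWave_neg_right,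
    conj_conj]

lemma integral_testFT_mul {f g : R2 → ℂ} (hf : Integrable f) (hg : Integrable g) :
    ∫ ξ, testFT f ξ * g ξ = ∫ x, f x * testFT g x := by
  have h : Integrable (Function.uncurry fun ξ x => planeWave ξ x * (g ξ * f x))
      (volume.prod volume) :=
    (hg.mul_prod hf).bdd_mul (c := 1)
      (continuous_planeWave continuous_fst continuous_snd).aestronglyMeasurable
      (by simp [norm_planeWave])
  calc ∫ ξ, testFT f ξ * g ξ = ∫ ξ, ∫ x, planeWave ξ x * (g ξ * f x) := by
        congr 1 with ξ
        rw [testFT_eq_integral_planeWave, ← integral_mul_const]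
        congr 1 with x
        rw [planeWave_comm, mul_assoc, mul_comm (g ξ)]
    _ = ∫ x, ∫ ξ, planeWave ξ x * (g ξ * f x) := integral_integral_swap h
    _ = ∫ x, f x * testFT g x := by
        congr 1 with x
        rw [testFT_eq_integral_planeWave, ← integral_const_mul]
        congr 1 with ξ
        ring

lemma testFT_mul_invTestFT {f G : R2 → ℂ} (hf : Integrable f) (hG : Integrable G) (ξ : R2) :
    testFT (fun x => f x * invTestFT G x) ξ =
      ((((2 * π) ^ 2)⁻¹ : ℝ) : ℂ) * ∫ η, testFT f (ξ - η) * G η := by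
  have hmod : ∀ η, testFT (fun x => planeWave (-x) ξ * f (-x)) η = testFT f (ξ - η) := fun η => by
    simp only [testFT_eq_integral_planeWave]
    rw [← integral_neg_eq_self]
    congr 1 with x
    rw [sub_eq_add_neg, planeWave_add_right, planeWave_neg_right, ← planeWave_neg_left, neg_neg]
    ring
  have hint : Integrable fun x => planeWave (-x) ξ * f (-x) :=
    (integrable_planeWave_mul hf ξ).comp_neg
  simp only [← hmod, integral_testFT_mul hint hG, ← integral_const_mul]
  rw [testFT_eq_integral_planeWave, ← integral_neg_eq_self]
  congr 1 with x
  rw [invTestFT, neg_neg]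
  ring

lemma contDiff_invTestFT {G : R2 → ℂ} (hG : ∀ n : ℕ, Integrable fun ξ => ‖ξ‖ ^ n * ‖G ξ‖) :
    ContDiff ℝ ∞ (invTestFT G) := by
  rw [funext (invTestFT_eq_fourier G)]
  refine Real.contDiff_fourier fun n _ => ?_
  have h := ((hG n).comp_smul (R := 2 * π) (by positivity)).const_mul ((2 * π) ^ n)⁻¹
  refine h.congr (ae_of_all _ fun v => ?_)
  simp only [norm_smul, Real.norm_of_nonneg Real.two_pi_pos.le]
  rw [mul_pow (2 * π), mul_assoc, inv_mul_cancel_left₀ (by positivity)]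

/-- Smooth compactly supported functions on the plane. -/
def IsTestFunction (φ : R2 → ℂ) : Prop := ContDiff ℝ ∞ φ ∧ HasCompactSupport φ

namespace IsTestFunction

variable {φ ψ : R2 → ℂ}

lemma continuous (h : IsTestFunction φ) : Continuous φ := h.1.continuous

lemma integrable (h : IsTestFunction φ) : Integrable φ :=
  h.continuous.integrable_of_hasCompactSupport h.2

lemma comp_sub_right (h : IsTestFunction φ) (a : R2) : IsTestFunction fun x => φ (x - a) :=
  ⟨h.1.comp (contDiff_id.sub contDiff_const), h.2.comp_homeomorph (Homeomorph.subRight a)⟩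

lemma conjugate (h : IsTestFunction φ) : IsTestFunction fun x => conj (φ x) :=
  ⟨Complex.conjCLE.contDiff.comp h.1, h.2.comp_left (map_zero _)⟩

lemma mul (h : IsTestFunction φ) (hψ : ContDiff ℝ ∞ ψ) : IsTestFunction fun x => φ x * ψ x :=
  ⟨h.1.mul hψ, h.2.mul_right⟩

lemma sub (h : IsTestFunction φ) (h' : IsTestFunction ψ) : IsTestFunction fun x => φ x - ψ x :=
  ⟨h.1.sub h'.1, h.2.sub h'.2⟩

lemma ofReal {g : R2 → ℝ} (hg : ContDiff ℝ ∞ g) (hg' : HasCompactSupport g) :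
    IsTestFunction fun x => (g x : ℂ) :=
  ⟨Complex.ofRealCLM.contDiff.comp hg, hg'.comp_left Complex.ofReal_zero⟩

/-- The transform `testFT φ` of a test function, as a Schwartz function. -/
def testFTSchwartz (h : IsTestFunction φ) : SchwartzMap R2 ℂ :=
  SchwartzMap.compCLMOfContinuousLinearEquiv ℂ
    (ContinuousLinearEquiv.smulLeft (Units.mk0 (2 * π)⁻¹ (by positivity)))
    (𝓕⁻ (h.2.toSchwartzMap h.1))

lemma coe_testFTSchwartz (h : IsTestFunction φ) : ⇑h.testFTSchwartz = testFT φ := by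
  ext ξ
  rw [testFT_eq_fourierInv, testFTSchwartz, SchwartzMap.compCLMOfContinuousLinearEquiv_apply,
    Function.comp_apply, SchwartzMap.fourierInv_coe]
  rfl

lemma continuous_testFT (h : IsTestFunction φ) : Continuous (testFT φ) :=
  h.coe_testFTSchwartz ▸ h.testFTSchwartz.continuous

lemma integrable_testFT (h : IsTestFunction φ) : Integrable (testFT φ) :=
  h.coe_testFTSchwartz ▸ h.testFTSchwartz.integrable

lemma invTestFT_testFT (h : IsTestFunction φ) : invTestFT (testFT φ) = φ := by
  have hscale : (fun v => testFT φ ((2 * π) • v)) = 𝓕⁻ (h.2.toSchwartzMap h.1) := by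
    ext v
    rw [testFT_eq_fourierInv, smul_smul, inv_mul_cancel₀ Real.two_pi_pos.ne', one_smul,
      SchwartzMap.fourierInv_coe]
    rfl
  ext x
  rw [invTestFT_eq_fourier, hscale, ← SchwartzMap.fourier_coe,
    FourierTransform.fourier_fourierInv_eq]
  rfl

lemma testFT_mul (h : IsTestFunction φ) (h' : IsTestFunction ψ) (ξ : R2) :
    testFT (fun x => φ x * ψ x) ξ =
      ((((2 * π) ^ 2)⁻¹ : ℝ) : ℂ) * ∫ η, testFT φ (ξ - η) * testFT ψ η := by
  rw [← testFT_mul_invTestFT h.integrable h'.integrable_testFT, h'.invTestFT_testFT]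

lemma parseval (h : IsTestFunction φ) (h' : IsTestFunction ψ) :
    ((((2 * π) ^ 2)⁻¹ : ℝ) : ℂ) * ∫ ξ, conj (testFT φ ξ) * testFT ψ ξ =
      ∫ x, conj (φ x) * ψ x := by
  have := h.conjugate.testFT_mul h' 0
  simp only [testFT_conj, zero_sub, neg_neg] at this
  rw [← this, testFT_eq_integral_planeWave]
  simp only [planeWave_comm _ 0, planeWave_zero_left, one_mul]

lemma integral_conj_testFT_mul_testFT_eq_zero (h : IsTestFunction φ) (h' : IsTestFunction ψ)
    (hd : Disjoint (Function.support φ) (Function.support ψ)) :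
    ∫ ξ, conj (testFT φ ξ) * testFT ψ ξ = 0 := by
  have hpar := h.parseval h'
  have hzero : ∀ x, conj (φ x) * ψ x = 0 := fun x => by
    by_cases hx : φ x = 0
    · rw [hx, map_zero, zero_mul]
    · rw [Function.notMem_support.1 (Set.disjoint_left.1 hd hx), mul_zero]
  simp only [hzero, integral_zero] at hpar
  exact (mul_eq_zero.1 hpar).resolve_left (Complex.ofReal_ne_zero.2 (by positivity))

end IsTestFunction

/-- A sequence of approximate identities, the `n`-th supported in the ball of radius `ε n`. -/
structure IsMollifierSeq (ρ : ℕ → R2 → ℂ) (ε : ℕ → ℝ) : Prop where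
  isTestFunction (n : ℕ) : IsTestFunction (ρ n)
  tsupport_subset (n : ℕ) : tsupport (ρ n) ⊆ Metric.closedBall 0 (ε n)
  norm_testFT_le_one (n : ℕ) (ξ : R2) : ‖testFT (ρ n) ξ‖ ≤ 1
  tendsto_testFT (ξ : R2) : Tendsto (fun n => testFT (ρ n) ξ) atTop (𝓝 1)

lemma exists_isMollifierSeq {ε : ℕ → ℝ} (hε : ∀ n, 0 < ε n) (hε0 : Tendsto ε atTop (𝓝 0)) :
    ∃ ρ, IsMollifierSeq ρ ε := by
  let b (n : ℕ) : ContDiffBump (0 : R2) :=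
    ⟨ε n / 2, ε n, half_pos (hε n), half_lt_self (hε n)⟩
  refine ⟨fun n x => ((b n).normed volume x : ℂ), fun n => ?_, fun n => ?_, fun n ξ => ?_,
    fun ξ => ?_⟩
  · exact .ofReal (b n).contDiff_normed (b n).hasCompactSupport_normed
  · rw [← show tsupport ((b n).normed volume) = _ from (b n).tsupport_normed_eq]
    exact closure_mono fun x hx => by simpa using hx
  · refine (norm_testFT_le _ ξ).trans_eq ?_
    simp only [Complex.norm_real, Real.norm_of_nonneg ((b n).nonneg_normed _)]
    exact (b n).integral_normed
  · have h := ContDiffBump.convolution_tendsto_right_of_continuous (μ := volume) (φ := b)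
      hε0 (g := fun x => planeWave (-x) ξ) (by fun_prop) 0
    simp only [neg_zero, planeWave_zero_left, MeasureTheory.convolution_def, zero_sub, neg_neg,
      ContinuousLinearMap.lsmul_apply, Complex.real_smul] at h
    simpa only [testFT_eq_integral_planeWave, mul_comm] using h

/-! ### Injectivity of the transform -/

lemma ae_eq_zero_of_testFT_eq_zero {f : R2 → ℂ} (hf : Integrable f) (h0 : ∀ ξ, testFT f ξ = 0) :
    f =ᵐ[volume] 0 := by
  refine ae_eq_zero_of_integral_contDiff_smul_eq_zero hf.locallyIntegrable fun g hg hgc => ?_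
  have hT := IsTestFunction.ofReal hg hgc
  have hflip : ∀ x, g x • f x =
      ((((2 * π) ^ 2)⁻¹ : ℝ) : ℂ) *
        (testFT (fun ξ => testFT (fun x => (g x : ℂ)) (-ξ)) x * f x) := fun x => by
    rw [Complex.real_smul, ← congrFun hT.invTestFT_testFT x, invTestFT, ← mul_assoc]
    congr 2
    simp only [testFT_eq_integral_planeWave (ξ := x), testFT_eq_integral_planeWave (ξ := -x)]
    rw [← integral_neg_eq_self]
    simp only [planeWave_neg_left, planeWave_neg_right, conj_conj]
  simp only [hflip, integral_const_mul, integral_testFT_mul hT.integrable_testFT.comp_neg hf, h0,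
    mul_zero, integral_zero]

/-- Translates of a mollifier recover the transform of `H`, without assuming `H` integrable. -/
lemma ae_eq_zero_of_integral_mul_testFT_eq_zero {H : R2 → ℂ}
    (hint : ∀ φ, IsTestFunction φ → Integrable fun ξ => H ξ * testFT φ ξ)
    (h0 : ∀ φ, IsTestFunction φ → ∫ ξ, H ξ * testFT φ ξ = 0) : H =ᵐ[volume] 0 := by
  obtain ⟨ρ, hρ⟩ := exists_isMollifierSeq (ε := fun n => 1 / ((n : ℝ) + 1))
    (fun n => by positivity) tendsto_one_div_add_atTop_nhds_zero_nat
  have hzero : ∀ n, (fun ξ => H ξ * testFT (ρ n) ξ) =ᵐ[volume] 0 := fun n => by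
    refine ae_eq_zero_of_testFT_eq_zero (hint _ (hρ.isTestFunction n)) fun a => ?_
    rw [← h0 _ ((hρ.isTestFunction n).comp_sub_right a), testFT_eq_integral_planeWave]
    congr 1 with ξ
    rw [testFT_comp_sub_right, planeWave_comm]
    ring
  filter_upwards [ae_all_iff.2 hzero] with ξ hξ
  have hlim := (hρ.tendsto_testFT ξ).const_mul (H ξ)
  simp only [hξ, Pi.zero_apply, mul_one] at hlim
  exact tendsto_nhds_unique hlim tendsto_const_nhds

/-! ### Sobolev weights -/

section SobolevWeight

variable {E F : Type*} [NormedAddCommGroup E]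

/-- The weight `⟨ξ⟩^s = (1 + |ξ|²)^{s/2}` of the Sobolev space of order `s`. -/
def sobolevWeight (s : ℝ) (ξ : E) : ℝ := (1 + ‖ξ‖ ^ 2) ^ (s / 2)

lemma sobolevWeight_pos (s : ℝ) (ξ : E) : 0 < sobolevWeight s ξ := by
  unfold sobolevWeight
  positivity

lemma ofReal_sobolevWeight_ne_zero (s : ℝ) (ξ : E) : (sobolevWeight s ξ : ℂ) ≠ 0 :=
  Complex.ofReal_ne_zero.2 (sobolevWeight_pos s ξ).ne'

lemma norm_ofReal_sobolevWeight (s : ℝ) (ξ : E) :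
    ‖(sobolevWeight s ξ : ℂ)‖ = sobolevWeight s ξ := by
  rw [Complex.norm_real, Real.norm_of_nonneg (sobolevWeight_pos s ξ).le]

@[fun_prop]
lemma continuous_sobolevWeight (s : ℝ) : Continuous (sobolevWeight s : E → ℝ) :=
  Continuous.rpow_const (by fun_prop) fun ξ => Or.inl (by positivity)

lemma sobolevWeight_zero (ξ : E) : sobolevWeight 0 ξ = 1 := by simp [sobolevWeight]

lemma sobolevWeight_neg (s : ℝ) (ξ : E) : sobolevWeight s (-ξ) = sobolevWeight s ξ := by
  simp [sobolevWeight]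

lemma sobolevWeight_add (s t : ℝ) (ξ : E) :
    sobolevWeight (s + t) ξ = sobolevWeight s ξ * sobolevWeight t ξ := by
  rw [sobolevWeight, add_div, Real.rpow_add (by positivity), sobolevWeight, sobolevWeight]

lemma sobolevWeight_mul_neg (s : ℝ) (ξ : E) :
    sobolevWeight s ξ * sobolevWeight (-s) ξ = 1 := by
  rw [← sobolevWeight_add, add_neg_cancel, sobolevWeight_zero]

lemma ofReal_sobolevWeight_mul_neg (s : ℝ) (ξ : E) :
    (sobolevWeight s ξ : ℂ) * sobolevWeight (-s) ξ = 1 := by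
  rw [← Complex.ofReal_mul, sobolevWeight_mul_neg, Complex.ofReal_one]

lemma sobolevWeight_sq (s : ℝ) (ξ : E) : sobolevWeight s ξ ^ 2 = (1 + ‖ξ‖ ^ 2) ^ s := by
  rw [sobolevWeight, ← Real.rpow_mul_natCast (by positivity), Nat.cast_ofNat,
    div_mul_cancel₀ _ two_ne_zero]

lemma sobolevWeight_mono {s t : ℝ} (h : s ≤ t) (ξ : E) : sobolevWeight s ξ ≤ sobolevWeight t ξ :=
  Real.rpow_le_rpow_of_exponent_le (le_add_of_nonneg_right (by positivity)) (by linarith)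

lemma one_add_norm_add_sq_le (ξ η : E) :
    1 + ‖ξ + η‖ ^ 2 ≤ 2 * (1 + ‖ξ‖ ^ 2) * (1 + ‖η‖ ^ 2) := by
  have h : ‖ξ + η‖ ^ 2 ≤ (‖ξ‖ + ‖η‖) ^ 2 := by
    gcongr
    exact norm_add_le ξ η
  nlinarith [sq_nonneg (‖ξ‖ - ‖η‖), mul_nonneg (sq_nonneg ‖ξ‖) (sq_nonneg ‖η‖)]

lemma sobolevWeight_add_le_of_nonneg {s : ℝ} (hs : 0 ≤ s) (ξ η : E) :
    sobolevWeight s (ξ + η) ≤ 2 ^ (s / 2) * sobolevWeight s ξ * sobolevWeight s η := by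
  simp only [sobolevWeight]
  rw [← Real.mul_rpow (by positivity) (by positivity),
    ← Real.mul_rpow (by positivity) (by positivity)]
  exact Real.rpow_le_rpow (by positivity) (one_add_norm_add_sq_le ξ η) (by positivity)

/-- Peetre's inequality. -/
lemma sobolevWeight_add_le (s : ℝ) (ξ η : E) :
    sobolevWeight s (ξ + η) ≤ 2 ^ (|s| / 2) * sobolevWeight s ξ * sobolevWeight |s| η := by
  rcases le_total 0 s with hs | hs
  · rw [abs_of_nonneg hs]
    exact sobolevWeight_add_le_of_nonneg hs ξ η
  · have h := sobolevWeight_add_le_of_nonneg (neg_nonneg.2 hs) (ξ + η) (-η)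
    rw [add_neg_cancel_right, sobolevWeight_neg] at h
    have h1 := sobolevWeight_pos s (ξ + η)
    have h2 := sobolevWeight_pos s ξ
    rw [abs_of_nonpos hs]
    calc sobolevWeight s (ξ + η)
        = sobolevWeight s ξ * sobolevWeight s (ξ + η) * sobolevWeight (-s) ξ := by
          rw [mul_right_comm, sobolevWeight_mul_neg, one_mul]
      _ ≤ sobolevWeight s ξ * sobolevWeight s (ξ + η) *
            (2 ^ (-s / 2) * sobolevWeight (-s) (ξ + η) * sobolevWeight (-s) η) := by gcongr
      _ = 2 ^ (-s / 2) * sobolevWeight s ξ * sobolevWeight (-s) η *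
            (sobolevWeight s (ξ + η) * sobolevWeight (-s) (ξ + η)) := by ring
      _ = _ := by rw [sobolevWeight_mul_neg, mul_one]

lemma sobolevWeight_natCast_le (n : ℕ) (ξ : E) : sobolevWeight n ξ ≤ (1 + ‖ξ‖) ^ n := by
  have h : 1 + ‖ξ‖ ^ 2 ≤ (1 + ‖ξ‖) ^ 2 := by nlinarith [norm_nonneg ξ]
  calc sobolevWeight n ξ ≤ ((1 + ‖ξ‖) ^ 2) ^ ((n : ℝ) / 2) :=
        Real.rpow_le_rpow (by positivity) h (by positivity)
    _ = (1 + ‖ξ‖) ^ n := by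
        rw [← Real.rpow_natCast_mul (by positivity), Nat.cast_ofNat,
          mul_div_cancel₀ _ two_ne_zero, Real.rpow_natCast]

lemma norm_pow_le_sobolevWeight (n : ℕ) (ξ : E) : ‖ξ‖ ^ n ≤ sobolevWeight n ξ := by
  calc ‖ξ‖ ^ n = (‖ξ‖ ^ 2) ^ ((n : ℝ) / 2) := by
        rw [← Real.rpow_natCast_mul (by positivity), Nat.cast_ofNat,
          mul_div_cancel₀ _ two_ne_zero, Real.rpow_natCast]
    _ ≤ sobolevWeight n ξ :=
        Real.rpow_le_rpow (by positivity) (le_add_of_nonneg_left zero_le_one) (by positivity)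

lemma exists_norm_le_sobolevWeight [NormedSpace ℝ E] [NormedAddCommGroup F] [NormedSpace ℝ F]
    (f : SchwartzMap E F) (s : ℝ) : ∃ C, 0 ≤ C ∧ ∀ ξ, ‖f ξ‖ ≤ C * sobolevWeight s ξ := by
  obtain ⟨n, hn⟩ := exists_nat_ge (-s)
  obtain ⟨C, hC⟩ : ∃ C, ∀ ξ, (1 + ‖ξ‖) ^ n * ‖f ξ‖ ≤ C :=
    ⟨_, fun ξ => by
      simpa only [norm_iteratedFDeriv_zero] using
        f.one_add_le_sup_seminorm_apply (𝕜 := ℝ) (m := (n, 0)) le_rfl le_rfl ξ⟩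
  refine ⟨C, (by positivity : (0 : ℝ) ≤ _).trans (hC 0), fun ξ => ?_⟩
  have hs := sobolevWeight_pos s ξ
  calc ‖f ξ‖ = sobolevWeight (-s) ξ * ‖f ξ‖ * sobolevWeight s ξ := by
        rw [mul_right_comm, mul_comm (sobolevWeight (-s) ξ), sobolevWeight_mul_neg, one_mul]
    _ ≤ (1 + ‖ξ‖) ^ n * ‖f ξ‖ * sobolevWeight s ξ := by
        gcongr
        exact (sobolevWeight_mono hn ξ).trans (sobolevWeight_natCast_le n ξ)
    _ ≤ C * sobolevWeight s ξ := by
        gcongr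
        exact hC ξ

variable [NormedSpace ℝ E] [FiniteDimensional ℝ E] [MeasurableSpace E] [BorelSpace E]
  {μ : Measure E} [μ.IsAddHaarMeasure]

lemma integrable_sobolevWeight {s : ℝ} (hs : (Module.finrank ℝ E : ℝ) < -s) :
    Integrable (sobolevWeight s) μ := by
  have h := integrable_rpow_neg_one_add_norm_sq (μ := μ) hs
  rwa [neg_neg] at h

lemma memLp_two_sobolevWeight {s : ℝ} (hs : (Module.finrank ℝ E : ℝ) < -(2 * s)) :
    MemLp (sobolevWeight s) 2 μ := by
  refine (memLp_two_iff_integrable_sq (by fun_prop)).2 ?_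
  convert integrable_sobolevWeight (μ := μ) hs using 2 with ξ
  rw [two_mul, sobolevWeight_add, sq]

/-- The product of an integrable kernel `K(x - y)` with two square integrable functions is
integrable by Schur's test, here in the form `2|ab| ≤ |a|² + |b|²`. -/
lemma integrable_comp_sub_mul_mul {K a b : E → ℂ} (hK : Integrable K μ) (ha : MemLp a 2 μ)
    (hb : MemLp b 2 μ) :
    Integrable (fun z : E × E => K (z.1 - z.2) * (a z.1 * b z.2)) (μ.prod μ) := by
  have ha2 := (memLp_two_iff_integrable_sq_norm ha.1).1 ha
  have hb2 := (memLp_two_iff_integrable_sq_norm hb.1).1 hb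
  have hKb := hb2.convolution_integrand (ContinuousLinearMap.mul ℝ ℝ) hK.norm
  have hKa := (ha2.convolution_integrand (ContinuousLinearMap.mul ℝ ℝ) hK.comp_neg.norm).swap
  refine (hKa.add hKb).mono' ?_ (ae_of_all _ fun ⟨x, y⟩ => ?_)
  · exact (hK.1.comp_quasiMeasurePreserving (quasiMeasurePreserving_sub μ μ)).mul
      (ha.1.comp_fst.mul hb.1.comp_snd)
  · simp only [Pi.add_apply, Function.comp_apply, Prod.swap, ContinuousLinearMap.mul_apply',
      norm_mul, neg_sub]
    nlinarith [mul_nonneg (norm_nonneg (K (x - y))) (sq_nonneg (‖a x‖ - ‖b y‖)),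
      mul_nonneg (norm_nonneg (K (x - y))) (mul_nonneg (norm_nonneg (a x)) (norm_nonneg (b y)))]

end SobolevWeight

namespace IsTestFunction

variable {φ : R2 → ℂ}

lemma exists_norm_testFT_le (h : IsTestFunction φ) (s : ℝ) :
    ∃ C, 0 ≤ C ∧ ∀ ξ, ‖testFT φ ξ‖ ≤ C * sobolevWeight s ξ := by
  simpa only [h.coe_testFTSchwartz] using exists_norm_le_sobolevWeight h.testFTSchwartz s

lemma exists_sobolevWeight_mul_norm_testFT_le (h : IsTestFunction φ) (s r : ℝ) :
    ∃ C, 0 ≤ C ∧ ∀ ξ, sobolevWeight s ξ * ‖testFT φ ξ‖ ≤ C * sobolevWeight r ξ := by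
  obtain ⟨C, hC, hle⟩ := h.exists_norm_testFT_le (r - s)
  refine ⟨C, hC, fun ξ => ?_⟩
  have := sobolevWeight_pos s ξ
  calc sobolevWeight s ξ * ‖testFT φ ξ‖ ≤ sobolevWeight s ξ * (C * sobolevWeight (r - s) ξ) := by
        gcongr
        exact hle ξ
    _ = C * sobolevWeight r ξ := by
        rw [mul_left_comm, ← sobolevWeight_add, add_sub_cancel]

lemma exists_sobolevWeight_mul_norm_testFT_sub_le (h : IsTestFunction φ) (s r : ℝ) :
    ∃ C, 0 ≤ C ∧ ∀ ξ η, sobolevWeight s η * ‖testFT φ (η - ξ)‖ ≤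
      C * sobolevWeight |r - s| ξ * sobolevWeight r η := by
  obtain ⟨C, hC, hle⟩ := h.exists_norm_testFT_le (r - s)
  refine ⟨C * 2 ^ (|r - s| / 2), by positivity, fun ξ η => ?_⟩
  have := sobolevWeight_pos s η
  have hshift : sobolevWeight (r - s) (η - ξ) ≤
      2 ^ (|r - s| / 2) * sobolevWeight (r - s) η * sobolevWeight |r - s| ξ := by
    simpa only [sobolevWeight_neg, ← sub_eq_add_neg] using sobolevWeight_add_le (r - s) η (-ξ)
  calc sobolevWeight s η * ‖testFT φ (η - ξ)‖
      ≤ sobolevWeight s η * (C * (2 ^ (|r - s| / 2) * sobolevWeight (r - s) η *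
          sobolevWeight |r - s| ξ)) := by
        gcongr
        exact (hle _).trans (by gcongr)
    _ = C * 2 ^ (|r - s| / 2) * sobolevWeight |r - s| ξ *
          (sobolevWeight s η * sobolevWeight (r - s) η) := by ring
    _ = _ := by rw [← sobolevWeight_add, add_sub_cancel]

lemma memLp_two_sobolevWeight_mul_testFT (h : IsTestFunction φ) (s : ℝ) :
    MemLp (fun ξ => (sobolevWeight s ξ : ℂ) * testFT φ ξ) 2 := by
  obtain ⟨C, -, hle⟩ := h.exists_sobolevWeight_mul_norm_testFT_le s (-2)
  have hmem : MemLp (sobolevWeight (-2) : R2 → ℝ) 2 := memLp_two_sobolevWeight (by norm_num)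
  have := h.continuous_testFT
  refine (hmem.const_mul C).mono' (by fun_prop) (ae_of_all _ fun ξ => ?_)
  rw [norm_mul, norm_ofReal_sobolevWeight]
  exact hle ξ

lemma integrable_sobolevWeight_mul_testFT (h : IsTestFunction φ) (s : ℝ) :
    Integrable fun ξ => (sobolevWeight s ξ : ℂ) * testFT φ ξ := by
  obtain ⟨C, -, hle⟩ := h.exists_sobolevWeight_mul_norm_testFT_le s (-3)
  have hint : Integrable (sobolevWeight (-3) : R2 → ℝ) := integrable_sobolevWeight (by norm_num)
  have := h.continuous_testFT
  refine (hint.const_mul C).mono' (by fun_prop) (ae_of_all _ fun ξ => ?_)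
  rw [norm_mul, norm_ofReal_sobolevWeight]
  exact hle ξ

/-- By Peetre's inequality, conjugating the convolution kernel `testFT φ (ξ - η)` with the weight
of order `s` costs only the weight of order `|s|` of `ξ - η`. -/
lemma integrable_testFT_sub_mul {s : ℝ} {u G : R2 → ℂ} (h : IsTestFunction φ)
    (hu : MemLp u 2) (hGm : AEStronglyMeasurable G)
    (hG : MemLp (fun ξ => (sobolevWeight s ξ : ℂ) * G ξ) 2) :
    Integrable (fun z : R2 × R2 => testFT φ (z.1 - z.2) * (sobolevWeight s z.1 * u z.1 * G z.2))
      (volume.prod volume) := by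
  have hmain := integrable_comp_sub_mul_mul (h.integrable_sobolevWeight_mul_testFT |s|) hu hG
  refine (hmain.norm.const_mul (2 ^ (|s| / 2))).mono' ?_ (ae_of_all _ fun ⟨ξ, η⟩ => ?_)
  · exact (h.continuous_testFT.comp (continuous_fst.sub continuous_snd)).aestronglyMeasurable.mul
      ((((continuous_ofReal.comp (continuous_sobolevWeight s)).aestronglyMeasurable.mul
        hu.1).comp_fst).mul hGm.comp_snd)
  · have hP : sobolevWeight s ξ ≤
        2 ^ (|s| / 2) * sobolevWeight s η * sobolevWeight |s| (ξ - η) := by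
      simpa only [add_sub_cancel] using sobolevWeight_add_le s η (ξ - η)
    simp only [norm_mul, norm_ofReal_sobolevWeight]
    calc ‖testFT φ (ξ - η)‖ * (sobolevWeight s ξ * ‖u ξ‖ * ‖G η‖)
        ≤ ‖testFT φ (ξ - η)‖ *
          ((2 ^ (|s| / 2) * sobolevWeight s η * sobolevWeight |s| (ξ - η)) * ‖u ξ‖ * ‖G η‖) := by
          gcongr
      _ = _ := by ring

end IsTestFunction

/-! ### The Fourier-side model of `H̃^{-s}(Γ)` -/

lemma continuous_toLp_of_dominated {X α E : Type*} [TopologicalSpace X] [FirstCountableTopology X]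
    [MeasurableSpace α] {μ : Measure α} [NormedAddCommGroup E] {p : ENNReal} [Fact (1 ≤ p)]
    (hp : p ≠ ⊤) {f : X → α → E} (hf : ∀ x, MemLp (f x) p μ)
    (hcont : ∀ a, Continuous fun x => f x a)
    (hdom : ∀ x₀, ∃ g : α → ℝ, MemLp g p μ ∧ ∀ᶠ x in 𝓝 x₀, ∀ᵐ a ∂μ, ‖f x a‖ ≤ g a) :
    Continuous fun x => (hf x).toLp (f x) := by
  have hp0 : p ≠ 0 := (zero_lt_one.trans_le Fact.out).ne'
  have hpr : 0 < p.toReal := ENNReal.toReal_pos hp0 hp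
  refine continuous_iff_continuousAt.2 fun x₀ => ?_
  obtain ⟨g, hg, hle⟩ := hdom x₀
  refine (Lp.tendsto_Lp_iff_tendsto_eLpNorm'' f hf (f x₀) (hf x₀)).2 ?_
  have hlim : Tendsto (fun x => ∫⁻ a, ‖(f x - f x₀) a‖ₑ ^ p.toReal ∂μ) (𝓝 x₀)
      (𝓝 (∫⁻ _, 0 ∂μ)) := by
    refine tendsto_lintegral_filter_of_dominated_convergence' (fun a => ‖(g + g) a‖ₑ ^ p.toReal)
      (.of_forall fun x => ((hf x).sub (hf x₀)).1.enorm.pow_const _) ?_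
      (lintegral_rpow_enorm_lt_top_of_eLpNorm_lt_top hp0 hp (hg.add hg).2).ne
      (ae_of_all _ fun a => ?_)
    · filter_upwards [hle] with x hx
      filter_upwards [hx, hle.self_of_nhds] with a ha ha₀
      refine ENNReal.rpow_le_rpow (enorm_le_iff_norm_le.2 ?_) hpr.le
      exact (norm_sub_le_of_le ha ha₀).trans (le_abs_self _)
    · have h := ((hcont a).sub continuous_const : Continuous fun x => f x a - f x₀ a).enorm
      simpa [hpr, Function.comp_def] using
        ((ENNReal.continuous_rpow_const (y := p.toReal)).comp h).tendsto x₀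
  simp only [eLpNorm_eq_lintegral_rpow_enorm_toReal hp0 hp]
  simpa [hpr, Function.comp_def] using
    ((ENNReal.continuous_rpow_const (y := 1 / p.toReal)).tendsto _).comp hlim

/-- The Hilbert space `L²(ℝ²; ℂ)`. -/
abbrev PlaneL2 : Type := Lp ℂ 2 (volume : Measure R2)

lemma inner_toLp_left {a : R2 → ℂ} (ha : MemLp a 2) (u : PlaneL2) :
    ⟪ha.toLp a, u⟫_ℂ = ∫ ξ, u ξ * conj (a ξ) := by
  rw [L2.inner_def]
  refine integral_congr_ae (ha.coeFn_toLp.mono fun ξ hξ => ?_)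
  dsimp only
  rw [hξ, RCLike.inner_apply]

lemma aestronglyMeasurable_sobolevWeight_mul (s : ℝ) (u : PlaneL2) :
    AEStronglyMeasurable fun ξ => (sobolevWeight s ξ : ℂ) * u ξ :=
  (by fun_prop : Continuous fun ξ : R2 => (sobolevWeight s ξ : ℂ)).aestronglyMeasurable.mul
    (Lp.memLp u).1

namespace IsTestFunction

variable {φ χ : R2 → ℂ}

lemma memLp_conj_sobolevWeight_mul_testFT (h : IsTestFunction φ) (s : ℝ) :
    MemLp (fun ξ => conj (sobolevWeight s ξ * testFT φ ξ)) 2 :=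
  (h.memLp_two_sobolevWeight_mul_testFT s).star

/-- The vector representing the functional `u ↦ ∫ ⟨ξ⟩^s u(ξ) testFT φ ξ dξ` on `L²`. -/
def testVector (h : IsTestFunction φ) (s : ℝ) : PlaneL2 :=
  (h.memLp_conj_sobolevWeight_mul_testFT s).toLp _

lemma sobolevWeight_mul_testVector_neg_ae_eq (h : IsTestFunction φ) (s : ℝ) :
    (fun ξ => sobolevWeight s ξ * h.testVector (-s) ξ) =ᵐ[volume]
      fun ξ => conj (testFT φ ξ) := by
  filter_upwards [(h.memLp_conj_sobolevWeight_mul_testFT (-s)).coeFn_toLp] with ξ hξ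
  rw [testVector, hξ, map_mul, Complex.conj_ofReal, ← mul_assoc, ofReal_sobolevWeight_mul_neg,
    one_mul]

lemma inner_testVector (h : IsTestFunction φ) (s : ℝ) (u : PlaneL2) :
    ⟪h.testVector s, u⟫_ℂ = ∫ ξ, sobolevWeight s ξ * u ξ * testFT φ ξ := by
  rw [testVector, inner_toLp_left]
  congr 1 with ξ
  rw [conj_conj]
  ring

lemma integrable_sobolevWeight_mul_mul_testFT (h : IsTestFunction φ) (s : ℝ) (u : PlaneL2) :
    Integrable fun ξ => sobolevWeight s ξ * u ξ * testFT φ ξ := by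
  refine ((h.memLp_two_sobolevWeight_mul_testFT s).integrable_mul (Lp.memLp u)).congr
    (ae_of_all _ fun ξ => ?_)
  simp only [Pi.mul_apply]
  ring

lemma memLp_two_sobolevWeight_mul_testFT_sub (h : IsTestFunction χ) (s : ℝ) (ξ : R2) :
    MemLp (fun η => (sobolevWeight s η : ℂ) * testFT χ (η - ξ)) 2 := by
  obtain ⟨C, -, hle⟩ := h.exists_sobolevWeight_mul_norm_testFT_sub_le s (-2)
  have hmem : MemLp (sobolevWeight (-2) : R2 → ℝ) 2 := memLp_two_sobolevWeight (by norm_num)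
  have := h.continuous_testFT
  refine (hmem.const_mul (C * sobolevWeight |-2 - s| ξ)).mono' (by fun_prop)
    (ae_of_all _ fun η => ?_)
  rw [norm_mul, norm_ofReal_sobolevWeight]
  exact hle ξ η

lemma memLp_cutoffKernel (h : IsTestFunction χ) (s : ℝ) (ξ : R2) :
    MemLp (fun η => ((((2 * π) ^ 2)⁻¹ : ℝ) : ℂ) * conj (sobolevWeight s η * testFT χ (η - ξ)))
      2 :=
  (h.memLp_two_sobolevWeight_mul_testFT_sub s ξ).star.const_mul _

/-- The vector representing evaluation at `ξ` of the Fourier transform of `χ f`, in terms of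
`u = ⟨·⟩^{-s} f̂`. -/
def cutoffKernel (h : IsTestFunction χ) (s : ℝ) (ξ : R2) : PlaneL2 :=
  (h.memLp_cutoffKernel s ξ).toLp _

lemma continuous_cutoffKernel (h : IsTestFunction χ) (s : ℝ) : Continuous (h.cutoffKernel s) := by
  obtain ⟨C, hC, hle⟩ := h.exists_sobolevWeight_mul_norm_testFT_sub_le s (-2)
  have hmem : MemLp (sobolevWeight (-2) : R2 → ℝ) 2 := memLp_two_sobolevWeight (by norm_num)
  have := h.continuous_testFT
  refine continuous_toLp_of_dominated ENNReal.ofNat_ne_top (h.memLp_cutoffKernel s)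
    (fun η => by fun_prop) fun ξ₀ => ?_
  refine ⟨_, hmem.const_mul (((2 * π) ^ 2)⁻¹ * (C * (sobolevWeight |-2 - s| ξ₀ + 1))), ?_⟩
  have hnhds : ∀ᶠ ξ in 𝓝 ξ₀, sobolevWeight |-2 - s| ξ < sobolevWeight |-2 - s| ξ₀ + 1 :=
    (continuous_sobolevWeight _).continuousAt.eventually_lt continuousAt_const (lt_add_one _)
  filter_upwards [hnhds] with ξ hξ
  refine ae_of_all _ fun η => ?_
  have hη := sobolevWeight_pos (-2) η
  rw [norm_mul, RCLike.norm_conj, norm_mul, norm_ofReal_sobolevWeight, Complex.norm_real,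
    Real.norm_of_nonneg (by positivity), mul_assoc]
  refine mul_le_mul_of_nonneg_left ((hle ξ η).trans ?_) (by positivity)
  gcongr

/-- The Fourier transform of `χ f`, where `f̂ = ⟨·⟩^s u`. -/
def localizedFT (h : IsTestFunction χ) (s : ℝ) (u : PlaneL2) (ξ : R2) : ℂ :=
  ⟪h.cutoffKernel s ξ, u⟫_ℂ

lemma localizedFT_eq_integral (h : IsTestFunction χ) (s : ℝ) (u : PlaneL2) (ξ : R2) :
    h.localizedFT s u ξ =
      ((((2 * π) ^ 2)⁻¹ : ℝ) : ℂ) * ∫ η, testFT χ (η - ξ) * (sobolevWeight s η * u η) := by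
  rw [localizedFT, cutoffKernel, inner_toLp_left, ← integral_const_mul]
  congr 1 with η
  rw [map_mul, conj_conj, Complex.conj_ofReal]
  ring

lemma continuous_localizedFT (h : IsTestFunction χ) (s : ℝ) (u : PlaneL2) :
    Continuous (h.localizedFT s u) :=
  (h.continuous_cutoffKernel s).inner continuous_const

section Transposition

variable {s : ℝ} {G : R2 → ℂ}

lemma localizedFT_mul (h : IsTestFunction χ) (s : ℝ) (u : PlaneL2) (ξ : R2) (z : ℂ) :
    h.localizedFT s u ξ * z = ((((2 * π) ^ 2)⁻¹ : ℝ) : ℂ) *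
      ∫ η, testFT χ (η - ξ) * (sobolevWeight s η * u η * z) := by
  rw [localizedFT_eq_integral, mul_assoc, ← integral_mul_const]
  simp only [mul_assoc]

lemma integrable_localizedFT_mul (h : IsTestFunction χ) (u : PlaneL2)
    (hGm : AEStronglyMeasurable G) (hG : MemLp (fun ξ => (sobolevWeight s ξ : ℂ) * G ξ) 2) :
    Integrable fun ξ => h.localizedFT s u ξ * G ξ := by
  simp only [localizedFT_mul]
  exact (h.integrable_testFT_sub_mul (Lp.memLp u) hGm hG).integral_prod_right.const_mul _

/-- Multiplication by `χ` is self-transpose. -/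
lemma integral_localizedFT_mul (h : IsTestFunction χ) (u : PlaneL2) (hG1 : Integrable G)
    (hG : MemLp (fun ξ => (sobolevWeight s ξ : ℂ) * G ξ) 2) :
    ∫ ξ, h.localizedFT s u ξ * G ξ =
      ∫ ξ, sobolevWeight s ξ * u ξ * testFT (fun x => χ x * invTestFT G x) ξ := by
  simp only [localizedFT_mul, testFT_mul_invTestFT h.integrable hG1]
  rw [integral_const_mul,
    ← integral_integral_swap (h.integrable_testFT_sub_mul (Lp.memLp u) hG1.1 hG),
    ← integral_const_mul]
  congr 1 with ξ
  rw [← integral_const_mul, mul_left_comm, ← integral_const_mul, ← integral_const_mul]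
  congr 1 with η
  ring

end Transposition

end IsTestFunction

/-- The space of all `u ∈ L²` such that `⟨·⟩^s u` is the Fourier transform of a distribution
supported in the closure of `Γ`: the image of `H̃^{-s}(Γ)` under `f ↦ ⟨·⟩^{-s} f̂`. -/
def sobolevModel (s : ℝ) (Γ : Set R2) : Submodule ℂ PlaneL2 :=
  (Submodule.span ℂ {w | ∃ (φ : R2 → ℂ) (h : IsTestFunction φ),
    tsupport φ ∩ closure Γ = ∅ ∧ h.testVector s = w})ᗮ

lemma mem_sobolevModel {s : ℝ} {Γ : Set R2} {u : PlaneL2} :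
    u ∈ sobolevModel s Γ ↔ ∀ φ, IsTestFunction φ → tsupport φ ∩ closure Γ = ∅ →
      ∫ ξ, sobolevWeight s ξ * u ξ * testFT φ ξ = 0 := by
  rw [sobolevModel, ← Submodule.span_singleton_le_iff_mem, ← Submodule.isOrtho_iff_le,
    Submodule.isOrtho_comm, Submodule.isOrtho_span]
  simp only [Set.mem_singleton_iff, forall_eq]
  constructor
  · intro hu φ hφ hd
    rw [← hφ.inner_testVector]
    exact hu ⟨φ, hφ, hd, rfl⟩
  · rintro hu _ ⟨φ, hφ, hd, rfl⟩
    rw [hφ.inner_testVector, hu φ hφ hd]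

instance (s : ℝ) (Γ : Set R2) : CompleteSpace (sobolevModel s Γ) :=
  (Submodule.isClosed_orthogonal _).completeSpace_coe

lemma IsTestFunction.testVector_neg_mem_sobolevModel {φ : R2 → ℂ} (h : IsTestFunction φ) {s : ℝ}
    {Γ : Set R2} (hφ : tsupport φ ⊆ Γ) : h.testVector (-s) ∈ sobolevModel s Γ := by
  refine mem_sobolevModel.2 fun ψ hψ hd => ?_
  have hdisj : Disjoint (Function.support φ) (Function.support ψ) :=
    (Set.disjoint_iff_inter_eq_empty.2 hd).symm.mono
      ((subset_tsupport φ).trans (hφ.trans subset_closure)) (subset_tsupport ψ)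
  rw [← h.integral_conj_testFT_mul_testFT_eq_zero hψ hdisj]
  exact integral_congr_ae
    ((h.sobolevWeight_mul_testVector_neg_ae_eq s).mul (ae_eq_refl (testFT ψ)))

/-- Smooth compactly supported cutoffs that equal `1` near the closure of `Γ`. -/
structure IsCutoff (Γ : Set R2) (χ : R2 → ℂ) : Prop where
  isTestFunction : IsTestFunction χ
  eventually_eq_one : ∀ᶠ x in 𝓝ˢ (closure Γ), χ x = 1

lemma exists_isCutoff {Γ : Set R2} (hΓ : Bornology.IsBounded Γ) : ∃ χ, IsCutoff Γ χ := by
  obtain ⟨R, hR⟩ := hΓ.closure.subset_ball (0 : R2)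
  let b : ContDiffBump (0 : R2) := ⟨|R| + 1, |R| + 2, by positivity, by linarith⟩
  refine ⟨fun x => (b x : ℂ), .ofReal b.contDiff b.hasCompactSupport, ?_⟩
  filter_upwards [Metric.isOpen_ball.mem_nhdsSet.2 hR] with x hx
  have hle : R ≤ b.rIn := (le_abs_self R).trans (lt_add_one _).le
  rw [b.one_of_mem_closedBall (Metric.ball_subset_closedBall.trans
    (Metric.closedBall_subset_closedBall hle) hx), Complex.ofReal_one]

lemma tsupport_inter_eq_empty_of_eventually {X M : Type*} [TopologicalSpace X] [Zero M] {f : X → M}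
    {S : Set X} (h : ∀ᶠ x in 𝓝ˢ S, f x = 0) : tsupport f ∩ S = ∅ := by
  rw [Set.inter_comm, ← Set.disjoint_iff_inter_eq_empty]
  refine Set.disjoint_left.2 fun x hxS => notMem_tsupport_iff_eventuallyEq.2 ?_
  exact h.filter_mono (nhds_le_nhdsSet hxS)

/-- A distribution supported in the closure of `Γ` does not change when multiplied by a cutoff. -/
lemma IsCutoff.localizedFT_ae_eq {s : ℝ} {Γ : Set R2} {χ : R2 → ℂ} (hχ : IsCutoff Γ χ) {u : PlaneL2}
    (hu : u ∈ sobolevModel s Γ) :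
    hχ.isTestFunction.localizedFT s u =ᵐ[volume] fun ξ => sobolevWeight s ξ * u ξ := by
  have hT := hχ.isTestFunction
  have hint₁ {φ : R2 → ℂ} (hφ : IsTestFunction φ) :
      Integrable fun ξ => hT.localizedFT s u ξ * testFT φ ξ :=
    hT.integrable_localizedFT_mul u hφ.continuous_testFT.aestronglyMeasurable
      (hφ.memLp_two_sobolevWeight_mul_testFT s)
  have hint₂ {φ : R2 → ℂ} (hφ : IsTestFunction φ) :
      Integrable fun ξ => sobolevWeight s ξ * u ξ * testFT φ ξ :=
    hφ.integrable_sobolevWeight_mul_mul_testFT s u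
  have hmain : (fun ξ => hT.localizedFT s u ξ - sobolevWeight s ξ * u ξ) =ᵐ[volume] 0 := by
    refine ae_eq_zero_of_integral_mul_testFT_eq_zero (fun φ hφ => ?_) fun φ hφ => ?_
    · simp only [sub_mul]
      exact (hint₁ hφ).sub (hint₂ hφ)
    · have hχφ : IsTestFunction fun x => χ x * φ x := hT.mul hφ.1
      have hvanish : ∀ᶠ x in 𝓝ˢ (closure Γ), χ x * φ x - φ x = 0 := by
        filter_upwards [hχ.eventually_eq_one] with x hx
        rw [hx, one_mul, sub_self]
      have hzero := mem_sobolevModel.1 hu _ (hχφ.sub hφ)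
        (tsupport_inter_eq_empty_of_eventually hvanish)
      simp only [testFT_sub hχφ.integrable hφ.integrable, mul_sub] at hzero
      rw [integral_sub (hint₂ hχφ) (hint₂ hφ)] at hzero
      simp only [sub_mul]
      rw [integral_sub (hint₁ hφ) (hint₂ hφ), hT.integral_localizedFT_mul u hφ.integrable_testFT
        (hφ.memLp_two_sobolevWeight_mul_testFT s), hφ.invTestFT_testFT, hzero]
  exact hmain.mono fun ξ hξ => sub_eq_zero.1 hξ

/-! ### The segment property and density of test functions -/

lemma exists_eventually_closedBall_add_subset {E : Type*} [NormedAddCommGroup E]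
    [ProperSpace E] {Γ : Set E} (ho : IsOpen Γ) {K : Set E}
    (hK : IsCompact K) {w : E} (hw : ∀ y ∈ K ∩ closure Γ, y + w ∈ Γ) :
    ∃ δ > 0, ∀ᶠ x in 𝓝ˢ (closure Γ), x ∈ K → Metric.closedBall (x + w) δ ⊆ Γ := by
  have hKw : IsCompact ((· + w) '' (K ∩ closure Γ)) :=
    (hK.inter_right isClosed_closure).image (by fun_prop)
  obtain ⟨δ, hδ, hsub⟩ := hKw.exists_cthickening_subset_open ho (Set.image_subset_iff.2 hw)
  refine ⟨δ / 2, half_pos hδ, eventually_nhdsSet_iff_forall.2 fun x hx => ?_⟩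
  by_cases hxK : x ∈ K
  · filter_upwards [Metric.ball_mem_nhds x (half_pos hδ)] with y hy _
    have hxw : x + w ∈ (· + w) '' (K ∩ closure Γ) := Set.mem_image_of_mem _ ⟨hxK, hx⟩
    refine subset_trans ?_ ((Metric.closedBall_subset_cthickening hxw δ).trans hsub)
    refine Metric.closedBall_subset_closedBall' ?_
    rw [dist_add_right]
    linarith [Metric.mem_ball.1 hy]
  · filter_upwards [hK.isClosed.isOpen_compl.mem_nhds hxK] with y hy hyK using absurd hyK hy

section SegmentProperty

variable {E : Type*} [NormedAddCommGroup E] [NormedSpace ℝ E] {Γ : Set E}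

/-- The segment property of a domain: near each boundary point the closure of the domain can be
translated a little in a fixed direction into the domain. -/
def HasSegmentProperty (Γ : Set E) : Prop :=
  ∀ x ∈ frontier Γ, ∃ U ∈ 𝓝 x, ∃ v : E, ∀ y ∈ U ∩ closure Γ, ∀ t ∈ Set.Ioo (0 : ℝ) 1,
    y + t • v ∈ Γ

lemma HasSegmentProperty.exists_isOpen (h : HasSegmentProperty Γ) (ho : IsOpen Γ) (x : E) :
    ∃ U, IsOpen U ∧ x ∈ U ∧ ∃ v : E, ∀ y ∈ U ∩ closure Γ, ∀ t ∈ Set.Ioo (0 : ℝ) 1,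
      y + t • v ∈ Γ := by
  by_cases hx : x ∈ closure Γ
  · by_cases hxΓ : x ∈ Γ
    · exact ⟨Γ, ho, hxΓ, 0, fun y hy t _ => by simpa only [smul_zero, add_zero] using hy.1⟩
    · obtain ⟨U, hU, v, hv⟩ := h x (ho.frontier_eq.symm ▸ Set.mem_sdiff_of_mem hx hxΓ)
      exact ⟨interior U, isOpen_interior, mem_interior_iff_mem_nhds.2 hU, v,
        fun y hy => hv y ⟨interior_subset hy.1, hy.2⟩⟩
  · exact ⟨(closure Γ)ᶜ, isClosed_closure.isOpen_compl, hx, 0, fun y hy => absurd hy.2 hy.1⟩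

end SegmentProperty

lemma IsLipschitzDomain.hasSegmentProperty {Γ : Set R2} (hΓ : IsLipschitzDomain Γ) :
    HasSegmentProperty Γ := by
  obtain ⟨-, -, -, hgraph⟩ := hΓ
  intro x hx
  obtain ⟨e, L, f, U, hf, hU, hxU, hUΓ⟩ := hgraph x hx
  have hfc := hf.continuous
  obtain ⟨r, hr, hrU⟩ := Metric.isOpen_iff.1 hU x hxU
  set up : R2 := e.symm (EuclideanSpace.single 1 1) with hup
  have hup_norm : ‖up‖ = 1 := by simp [hup]
  refine ⟨Metric.ball x (r / 2), Metric.ball_mem_nhds x (half_pos hr), (r / 2) • up,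
    fun y hy t ht => ?_⟩
  have hyx := Metric.mem_ball.1 hy.1
  have hyU : y ∈ U := hrU (hyx.trans (half_lt_self hr))
  have habove : f (e y 0) ≤ e y 1 := by
    have hclosed : IsClosed {z : R2 | f (e z 0) ≤ e z 1} :=
      isClosed_le (by fun_prop) (by fun_prop)
    exact closure_minimal (fun z hz => ((hUΓ z hz.1).1 hz.2).le) hclosed
      (hU.inter_closure ⟨hyU, hy.2⟩)
  have hpos : 0 < t * (r / 2) := mul_pos ht.1 (half_pos hr)
  have hmem : y + t • (r / 2) • up ∈ U := hrU <| by
    have hdist : dist (y + t • (r / 2) • up) y = t * (r / 2) := by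
      rw [dist_self_add_left, smul_smul, norm_smul, hup_norm, mul_one, Real.norm_of_nonneg hpos.le]
    rw [Metric.mem_ball]
    nlinarith [dist_triangle (y + t • (r / 2) • up) y x, ht.2]
  rw [hUΓ _ hmem, map_add, map_smul, map_smul, hup, LinearIsometryEquiv.apply_symm_apply]
  simpa using habove.trans_lt (lt_add_of_pos_right _ hpos)

lemma exists_contDiff_sum_eq_one {E ι : Type*} [NormedAddCommGroup E] [NormedSpace ℝ E]
    [FiniteDimensional ℝ E] {K : Set E} (hK : IsCompact K) {U : ι → Set E}
    (hU : ∀ i, IsOpen (U i)) (hcov : K ⊆ ⋃ i, U i) : ∃ (t : Finset ι) (P : t → E → ℝ),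
      (∀ i, ContDiff ℝ ∞ (P i)) ∧ (∀ i, tsupport (P i) ⊆ U i) ∧ ∀ x ∈ K, ∑ i, P i x = 1 := by
  obtain ⟨t, ht⟩ := hK.elim_finite_subcover U hU hcov
  have htcov : K ⊆ ⋃ i : t, U i := fun x hx => by
    obtain ⟨i, hi, hxi⟩ := Set.mem_iUnion₂.1 (ht hx)
    exact Set.mem_iUnion.2 ⟨⟨i, hi⟩, hxi⟩
  obtain ⟨P, hP⟩ := SmoothPartitionOfUnity.exists_isSubordinate (modelWithCornersSelf ℝ E)
    hK.isClosed (fun i : t => U i) (fun i => hU i) htcov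
  refine ⟨t, fun i => P i, fun i => (P i).contMDiff.contDiff, hP, fun x hx => ?_⟩
  rw [← finsum_eq_sum_of_fintype]
  exact P.sum_eq_one hx

namespace IsTestFunction

variable {φ χ ρ : R2 → ℂ} {s : ℝ} {Γ : Set R2}

lemma exists_sum_eq {ι : Type*} (h : IsTestFunction φ) {U : ι → Set R2} (hU : ∀ i, IsOpen (U i))
    (hcov : tsupport φ ⊆ ⋃ i, U i) : ∃ (t : Finset ι) (χ : t → R2 → ℂ),
      (∀ i, IsTestFunction (χ i) ∧ tsupport (χ i) ⊆ U i) ∧ ∀ x, φ x = ∑ i, χ i x := by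
  obtain ⟨t, P, hP, hPU, hPone⟩ := exists_contDiff_sum_eq_one h.2.isCompact hU hcov
  refine ⟨t, fun i x => φ x * P i x, fun i => ⟨h.mul (Complex.ofRealCLM.contDiff.comp (hP i)),
    subset_trans ?_ (hPU i)⟩, fun x => ?_⟩
  · exact (tsupport_mul_subset_right (f := φ)).trans
      (closure_mono fun x hx => Complex.ofReal_ne_zero.1 hx)
  rw [← Finset.mul_sum, ← Complex.ofReal_sum]
  by_cases hx : x ∈ tsupport φ
  · rw [hPone x hx, Complex.ofReal_one, mul_one]
  · rw [image_eq_zero_of_notMem_tsupport hx, zero_mul]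

lemma localizedFT_eq_sum {ι : Type*} [Fintype ι] {χ : ι → R2 → ℂ} (h : IsTestFunction φ)
    (hχ : ∀ i, IsTestFunction (χ i)) (hsum : ∀ x, φ x = ∑ i, χ i x) (s : ℝ) (u : PlaneL2)
    (ξ : R2) : h.localizedFT s u ξ = ∑ i, (hχ i).localizedFT s u ξ := by
  have hint (i : ι) (η : R2) : Integrable fun x => planeWave x η * χ i x :=
    integrable_planeWave_mul (hχ i).integrable η
  have htest (η : R2) : testFT φ η = ∑ i, testFT (χ i) η := by
    simp only [testFT_eq_integral_planeWave, hsum, Finset.mul_sum]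
    exact integral_finsetSum _ fun i _ => hint i η
  have hint' (i : ι) : Integrable fun η => testFT (χ i) (η - ξ) * (sobolevWeight s η * u η) :=
    (((hχ i).memLp_two_sobolevWeight_mul_testFT_sub s ξ).integrable_mul (Lp.memLp u)).congr
      (ae_of_all _ fun η => by simp only [Pi.mul_apply]; ring)
  simp only [localizedFT_eq_integral, htest, Finset.sum_mul, ← Finset.mul_sum]
  rw [integral_finsetSum _ fun i _ => hint' i]

/-- For `g` with `ĝ = ⟨·⟩^s v`, the function `conj (⟨·⟩^s v · testFT ρ)` is the Fourier transform
of the smooth function `x ↦ conj ⟨g, ρ(· - x)⟩`. -/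
lemma integrable_norm_pow_mul_conj (h : IsTestFunction ρ) (s : ℝ) (v : PlaneL2) (n : ℕ) :
    Integrable fun ξ => ‖ξ‖ ^ n * ‖conj (sobolevWeight s ξ * v ξ * testFT ρ ξ)‖ := by
  have hmeas : AEStronglyMeasurable fun ξ => sobolevWeight s ξ * v ξ * testFT ρ ξ :=
    (h.integrable_sobolevWeight_mul_mul_testFT s v).1
  refine (h.integrable_sobolevWeight_mul_mul_testFT (n + s) v).norm.mono'
    (AEStronglyMeasurable.mul (by fun_prop) (by simpa only [RCLike.norm_conj] using hmeas.norm))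
    (ae_of_all _ fun ξ => ?_)
  simp only [norm_mul, norm_pow, norm_norm, RCLike.norm_conj, sobolevWeight_add,
    Complex.ofReal_mul, mul_assoc, norm_ofReal_sobolevWeight,
    Real.norm_of_nonneg (sobolevWeight_pos s ξ).le]
  exact mul_le_mul_of_nonneg_right (norm_pow_le_sobolevWeight n ξ)
    (mul_nonneg (sobolevWeight_pos s ξ).le (by positivity))

lemma invTestFT_conj_sobolevWeight_mul (h : IsTestFunction ρ) (s : ℝ) (v : PlaneL2) (x : R2) :
    invTestFT (fun ξ => conj (sobolevWeight s ξ * v ξ * testFT ρ ξ)) x =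
      ((((2 * π) ^ 2)⁻¹ : ℝ) : ℂ) * conj ⟪(h.comp_sub_right x).testVector s, v⟫_ℂ := by
  rw [invTestFT, testFT_eq_integral_planeWave, inner_testVector, ← integral_conj]
  congr 2 with ξ
  rw [testFT_comp_sub_right, planeWave_neg_right, planeWave_comm ξ]
  simp only [map_mul]
  ring

/-- The product of `χ` with the regularization of `v` by `ρ` vanishes near the closure of `Γ`. -/
lemma integral_localizedFT_mul_conj_testFT_eq_zero (hχ : IsTestFunction χ) (hρ : IsTestFunction ρ)
    {f v : PlaneL2} (hf : f ∈ sobolevModel s Γ)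
    (hv : ∀ φ (h : IsTestFunction φ), tsupport φ ⊆ Γ → ⟪h.testVector (-s), v⟫_ℂ = 0)
    (hsupp : ∀ᶠ x in 𝓝ˢ (closure Γ), x ∈ tsupport χ → tsupport (fun y => ρ (y - x)) ⊆ Γ) :
    ∫ ξ, hχ.localizedFT s f ξ * conj (sobolevWeight (-s) ξ * v ξ * testFT ρ ξ) = 0 := by
  set G : R2 → ℂ := fun ξ => conj (sobolevWeight (-s) ξ * v ξ * testFT ρ ξ) with hG
  have hG1 : Integrable G :=
    (integrable_norm_iff (by
      exact continuous_conj.comp_aestronglyMeasurable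
        (hρ.integrable_sobolevWeight_mul_mul_testFT (-s) v).1)).1
      (by simpa only [pow_zero, one_mul] using hρ.integrable_norm_pow_mul_conj (-s) v 0)
  have hG2 : MemLp (fun ξ => (sobolevWeight s ξ : ℂ) * G ξ) 2 := by
    have htop : MemLp (testFT ρ) ⊤ := hρ.coe_testFTSchwartz ▸ hρ.testFTSchwartz.memLp ⊤
    have hprod : MemLp (testFT ρ * ⇑v) 2 := (Lp.memLp v).mul htop
    convert hprod.star using 2 with ξ
    calc (sobolevWeight s ξ : ℂ) * conj (sobolevWeight (-s) ξ * v ξ * testFT ρ ξ)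
        = (sobolevWeight s ξ * sobolevWeight (-s) ξ : ℂ) * conj (testFT ρ ξ * v ξ) := by
          simp only [map_mul, Complex.conj_ofReal]
          ring
      _ = star ((testFT ρ * ⇑v) ξ) := by rw [ofReal_sobolevWeight_mul_neg, one_mul]; rfl
  have hsmooth : ContDiff ℝ ∞ (invTestFT G) :=
    contDiff_invTestFT (hρ.integrable_norm_pow_mul_conj (-s) v)
  rw [hχ.integral_localizedFT_mul f hG1 hG2]
  refine mem_sobolevModel.1 hf _ (hχ.mul hsmooth) (tsupport_inter_eq_empty_of_eventually ?_)
  filter_upwards [hsupp] with x hx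
  by_cases hxχ : x ∈ tsupport χ
  · rw [hG, hρ.invTestFT_conj_sobolevWeight_mul, hv _ _ (hx hxχ), map_zero, mul_zero, mul_zero]
  · rw [image_eq_zero_of_notMem_tsupport hxχ, zero_mul]

lemma memLp_two_sobolevWeight_mul_conj (s : ℝ) (v : PlaneL2) :
    MemLp (fun ξ => (sobolevWeight s ξ : ℂ) * conj (sobolevWeight (-s) ξ * v ξ)) 2 := by
  convert (Lp.memLp v).star using 2 with ξ
  rw [map_mul, Complex.conj_ofReal, ← mul_assoc, ofReal_sobolevWeight_mul_neg, one_mul]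
  rfl

/-- Mollifiers whose translates to points of `K` near the closure of `Γ` live inside `Γ`. -/
lemma exists_testFT_tendsto_one (ho : IsOpen Γ) {K : Set R2} (hK : IsCompact K) {w : R2}
    (hw : ∀ y ∈ K ∩ closure Γ, ∀ t ∈ Set.Ioo (0 : ℝ) 1, y + t • w ∈ Γ) :
    ∃ ρ : ℕ → R2 → ℂ, (∀ n, IsTestFunction (ρ n)) ∧ (∀ n ξ, ‖testFT (ρ n) ξ‖ ≤ 1) ∧
      (∀ ξ, Tendsto (fun n => testFT (ρ n) ξ) atTop (𝓝 1)) ∧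
      ∀ n, ∀ᶠ x in 𝓝ˢ (closure Γ), x ∈ K → tsupport (fun y => ρ n (y - x)) ⊆ Γ := by
  obtain ⟨τ, -, hτ, hτ0⟩ := exists_seq_strictAnti_tendsto' (zero_lt_one (α := ℝ))
  choose δ hδ hsub using fun n =>
    exists_eventually_closedBall_add_subset ho hK fun y hy => hw y hy (τ n) (hτ n)
  obtain ⟨ρ, hρ⟩ := exists_isMollifierSeq (ε := fun n => min (δ n) (τ n))
    (fun n => lt_min (hδ n) (hτ n).1) (squeeze_zero (fun n => le_min (hδ n).le (hτ n).1.le)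
      (fun n => min_le_right _ _) hτ0)
  refine ⟨fun n x => ρ n (x - τ n • w), fun n => (hρ.isTestFunction n).comp_sub_right _,
    fun n ξ => ?_, fun ξ => ?_, fun n => ?_⟩
  · rw [testFT_comp_sub_right, norm_mul, norm_planeWave, one_mul]
    exact hρ.norm_testFT_le_one n ξ
  · have hshift : Tendsto (fun n => planeWave (τ n • w) ξ) atTop (𝓝 1) := by
      have hcont : Continuous fun t : ℝ => planeWave (t • w) ξ := by fun_prop
      simpa only [zero_smul, planeWave_zero_left, Function.comp_def] using
        (hcont.tendsto 0).comp hτ0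
    simpa only [testFT_comp_sub_right, mul_one] using hshift.mul (hρ.tendsto_testFT ξ)
  · filter_upwards [hsub n] with x hx hxK
    refine subset_trans (fun y hy => ?_) (hx hxK)
    have hy' : y - x - τ n • w ∈ Metric.closedBall 0 (min (δ n) (τ n)) :=
      hρ.tsupport_subset n (tsupport_comp_subset_preimage (ρ n)
        (f := fun y => y - x - τ n • w) (by fun_prop) hy)
    rw [mem_closedBall_zero_iff, sub_sub] at hy'
    exact mem_closedBall_iff_norm.2 (hy'.trans (min_le_left _ _))

lemma integral_localizedFT_mul_conj_eq_zero (hχ : IsTestFunction χ) (ho : IsOpen Γ) {w : R2}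
    (hw : ∀ y ∈ tsupport χ ∩ closure Γ, ∀ t ∈ Set.Ioo (0 : ℝ) 1, y + t • w ∈ Γ)
    {f v : PlaneL2} (hf : f ∈ sobolevModel s Γ)
    (hv : ∀ φ (h : IsTestFunction φ), tsupport φ ⊆ Γ → ⟪h.testVector (-s), v⟫_ℂ = 0) :
    Integrable (fun ξ => hχ.localizedFT s f ξ * conj (sobolevWeight (-s) ξ * v ξ)) ∧
      ∫ ξ, hχ.localizedFT s f ξ * conj (sobolevWeight (-s) ξ * v ξ) = 0 := by
  have hint : Integrable fun ξ => hχ.localizedFT s f ξ * conj (sobolevWeight (-s) ξ * v ξ) :=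
    hχ.integrable_localizedFT_mul f (continuous_conj.comp_aestronglyMeasurable
      (aestronglyMeasurable_sobolevWeight_mul (-s) v)) (memLp_two_sobolevWeight_mul_conj s v)
  refine ⟨hint, ?_⟩
  obtain ⟨ρ, hρ, hle, hlim, hsupp⟩ := exists_testFT_tendsto_one ho hχ.2.isCompact hw
  refine tendsto_nhds_unique (tendsto_integral_of_dominated_convergence _ (fun n => ?_) hint.norm
    (fun n => ae_of_all _ fun ξ => ?_) (ae_of_all _ fun ξ => ?_)) (tendsto_const_nhds.congr fun n =>
      (hχ.integral_localizedFT_mul_conj_testFT_eq_zero (hρ n) hf hv (hsupp n)).symm)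
  · simp only [map_mul _ (_ * _) (testFT _ _), ← mul_assoc]
    exact hint.1.mul (continuous_conj.comp (hρ n).continuous_testFT).aestronglyMeasurable
  · rw [map_mul _ (_ * _), ← mul_assoc, norm_mul, RCLike.norm_conj]
    exact mul_le_of_le_one_right (norm_nonneg _) (hle n ξ)
  · simpa only [mul_one, Function.comp_def] using ((continuous_conj.tendsto _).comp
      ((hlim ξ).const_mul (sobolevWeight (-s) ξ * v ξ))).const_mul (hχ.localizedFT s f ξ)

end IsTestFunction

/-- **Density of test functions**: a vector orthogonal to all test functions supported in `Γ` is
orthogonal to all of `H̃^{-s}(Γ)`. -/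
lemma mem_orthogonal_sobolevModel_iff {s : ℝ} {Γ : Set R2} (hb : Bornology.IsBounded Γ)
    (ho : IsOpen Γ) (hseg : HasSegmentProperty Γ) {v : PlaneL2} :
    v ∈ (sobolevModel s Γ)ᗮ ↔
      ∀ φ (h : IsTestFunction φ), tsupport φ ⊆ Γ → ⟪h.testVector (-s), v⟫_ℂ = 0 := by
  refine ⟨fun hv φ h hφ => (Submodule.mem_orthogonal _ _).1 hv _
    (h.testVector_neg_mem_sobolevModel hφ), fun hv => ?_⟩
  refine (Submodule.mem_orthogonal' _ _).2 fun f hf => ?_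
  obtain ⟨χ, hχ⟩ := exists_isCutoff hb
  choose U hU hxU w hw using hseg.exists_isOpen ho
  obtain ⟨t, χ', hχ', hsum⟩ := hχ.isTestFunction.exists_sum_eq hU
    fun x _ => Set.mem_iUnion.2 ⟨x, hxU x⟩
  have hzero (i : t) := (hχ' i).1.integral_localizedFT_mul_conj_eq_zero ho (w := w i)
    (fun y hy => hw i y ⟨(hχ' i).2 hy.1, hy.2⟩) hf hv
  calc ⟪v, f⟫_ℂ = ∫ ξ, hχ.isTestFunction.localizedFT s f ξ * conj (sobolevWeight (-s) ξ * v ξ) := by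
        rw [L2.inner_def]
        refine integral_congr_ae ((hχ.localizedFT_ae_eq hf).mono fun ξ hξ => ?_)
        dsimp only
        rw [hξ, map_mul, Complex.conj_ofReal, mul_mul_mul_comm, ofReal_sobolevWeight_mul_neg,
          one_mul, RCLike.inner_apply]
    _ = ∑ i, ∫ ξ, (hχ' i).1.localizedFT s f ξ * conj (sobolevWeight (-s) ξ * v ξ) := by
        rw [← integral_finsetSum _ fun i _ => (hzero i).1]
        simp only [hχ.isTestFunction.localizedFT_eq_sum (fun i => (hχ' i).1) hsum, Finset.sum_mul]
    _ = 0 := Finset.sum_eq_zero fun i _ => (hzero i).2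

/-! ### Fourier multipliers of elliptic type -/

section Operators

variable {X E : Type*} [MeasurableSpace X] {μ : Measure X} [NormedAddCommGroup E]

/-- Multiplication by an essentially bounded function, as an operator on `L²`. -/
def mulLpTwo {a : X → ℂ} (ha : MemLp a ⊤ μ) : Lp ℂ 2 μ →L[ℂ] Lp ℂ 2 μ :=
  (ContinuousLinearMap.mul ℂ ℂ).holderL μ ⊤ 2 2 (ha.toLp a)

lemma mulLpTwo_ae_eq {a : X → ℂ} (ha : MemLp a ⊤ μ) (u : Lp ℂ 2 μ) :
    mulLpTwo ha u =ᵐ[μ] fun x => a x * u x := by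
  filter_upwards [(ContinuousLinearMap.mul ℂ ℂ).coeFn_holder (r := 2) (ha.toLp a) u,
    ha.coeFn_toLp] with x hx hax
  rw [mulLpTwo, ContinuousLinearMap.holderL_apply_apply, hx, hax, ContinuousLinearMap.mul_apply']

lemma norm_mulLpTwo_sub_smul_one_le {a : X → ℂ} (ha : MemLp a ⊤ μ) {c : ℂ} {r : ℝ} (hr : 0 ≤ r)
    (h : ∀ᵐ x ∂μ, ‖a x - c‖ ≤ r) : ‖mulLpTwo ha - c • 1‖ ≤ r := by
  refine ContinuousLinearMap.opNorm_le_bound _ hr fun u => Lp.norm_le_mul_norm_of_ae_le_mul ?_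
  filter_upwards [h, mulLpTwo_ae_eq ha u, Lp.coeFn_sub (mulLpTwo ha u) (c • u),
    Lp.coeFn_smul c u] with x hx hau hsub hsmul
  calc ‖(mulLpTwo ha u - c • u) x‖ = ‖a x - c‖ * ‖u x‖ := by
        rw [hsub, Pi.sub_apply, hau, hsmul, Pi.smul_apply, smul_eq_mul, ← sub_mul, norm_mul]
    _ ≤ r * ‖u x‖ := by gcongr

/-- The compression of an operator to a closed subspace. -/
def compression {𝕜 H : Type*} [RCLike 𝕜] [NormedAddCommGroup H] [InnerProductSpace 𝕜 H]
    (W : Submodule 𝕜 H) [W.HasOrthogonalProjection] (B : H →L[𝕜] H) : W →L[𝕜] W :=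
  W.orthogonalProjectionOnto ∘L B ∘L W.subtypeL

section Compression

variable {𝕜 H : Type*} [RCLike 𝕜] [NormedAddCommGroup H] [InnerProductSpace 𝕜 H]
  (W : Submodule 𝕜 H) [W.HasOrthogonalProjection]

lemma inner_compression (B : H →L[𝕜] H) (u v : W) : ⟪v, compression W B u⟫_𝕜 = ⟪(v : H), B u⟫_𝕜 :=
  Submodule.inner_orthogonalProjectionOnto_eq_of_mem_left v _

lemma norm_compression_le (B : H →L[𝕜] H) : ‖compression W B‖ ≤ ‖B‖ :=
  calc ‖compression W B‖ ≤ 1 * (‖B‖ * 1) :=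
        (ContinuousLinearMap.opNorm_comp_le _ _).trans <|
          mul_le_mul W.orthogonalProjectionOnto_norm_le
            ((ContinuousLinearMap.opNorm_comp_le _ _).trans
              (mul_le_mul_of_nonneg_left W.norm_subtypeL_le (norm_nonneg B)))
            (norm_nonneg _) zero_le_one
    _ = ‖B‖ := by rw [one_mul, mul_one]

lemma isUnit_compression [CompleteSpace W] {B : H →L[𝕜] H} {c : 𝕜} (hB : ‖B - c • 1‖ < ‖c‖) :
    IsUnit (compression W B) := by
  have hsmall : ‖compression W (c • 1 - B)‖ * ‖(1 : W →L[𝕜] W)‖ < ‖c‖ :=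
    calc ‖compression W (c • 1 - B)‖ * ‖(1 : W →L[𝕜] W)‖ ≤ ‖B - c • 1‖ * 1 := by
          rw [← norm_sub_rev]
          exact mul_le_mul (norm_compression_le W _) ContinuousLinearMap.norm_id_le
            (norm_nonneg _) (norm_nonneg _)
      _ < ‖c‖ := by rwa [mul_one]
  have hunit : IsUnit (algebraMap 𝕜 (W →L[𝕜] W) c - compression W (c • 1 - B)) :=
    spectrum.mem_resolventSet_of_norm_lt_mul hsmall
  convert hunit using 1
  ext u : 1
  refine ext_inner_left 𝕜 fun v => ?_
  have hcu : ⟪(v : H), (c • (1 : H →L[𝕜] H) - B) u⟫_𝕜 = c * ⟪(v : H), u⟫_𝕜 - ⟪(v : H), B u⟫_𝕜 := by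
    rw [sub_apply, smul_apply, one_apply_eq_self, inner_sub_right, inner_smul_right]
  rw [sub_apply, inner_sub_right, inner_compression, inner_compression, hcu,
    Algebra.algebraMap_eq_smul_one, smul_apply, one_apply_eq_self, inner_smul_right,
    Submodule.coe_inner, sub_sub_cancel]

end Compression

lemma integral_mem_topologicalClosure [NormedSpace ℂ E] [CompleteSpace E] (S : Submodule ℂ E)
    {f : X → E} (hf : ∀ x, f x ∈ S) :
    ∫ x, f x ∂μ ∈ S.topologicalClosure := by
  by_cases hfi : Integrable f μ
  · have hclosed : IsClosed (S.topologicalClosure : Set E) := S.isClosed_topologicalClosure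
    have hker : S.topologicalClosure.mkQL (∫ x, f x ∂μ) = 0 := by
      rw [← ContinuousLinearMap.integral_comp_comm _ hfi]
      refine integral_eq_zero_of_ae (ae_of_all _ fun x => ?_)
      exact (Submodule.Quotient.mk_eq_zero _).2 (S.le_topologicalClosure (hf x))
    exact (Submodule.Quotient.mk_eq_zero _).1 hker
  · rw [integral_undef hfi]
    exact zero_mem _

variable [InnerProductSpace ℂ E]

lemma rankOne_mem_finiteRankOperators (x y : E) :
    InnerProductSpace.rankOne ℂ x y ∈ finiteRankOperators ℂ E E := by
  rw [mem_finiteRankOperators, InnerProductSpace.rankOne_def']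
  exact LinearMap.HasFiniteRange.of_finite_dom.comp_right _

lemma inner_integral_smul_rankOne [CompleteSpace E] {m : X → ℂ} {κ : X → E}
    (h : Integrable (fun x => m x • InnerProductSpace.rankOne ℂ (κ x) (κ x)) μ) (u v : E) :
    ⟪v, (∫ x, m x • InnerProductSpace.rankOne ℂ (κ x) (κ x) ∂μ) u⟫_ℂ =
      ∫ x, m x * (⟪κ x, u⟫_ℂ * conj ⟪κ x, v⟫_ℂ) ∂μ := by
  have hu : Integrable (fun x => (m x • InnerProductSpace.rankOne ℂ (κ x) (κ x)) u) μ :=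
    (ContinuousLinearMap.apply ℂ E u).integrable_comp h
  rw [ContinuousLinearMap.integral_apply h, ← integral_inner hu]
  congr 1 with x
  rw [smul_apply, InnerProductSpace.rankOne_apply, inner_smul_right, inner_smul_right,
    inner_conj_symm]

/-- An operator-valued integral of rank-one operators is a norm limit of finite-rank operators. -/
lemma exists_inner_eq_setIntegral_mul [CompleteSpace E] [TopologicalSpace X]
    [OpensMeasurableSpace X] [SecondCountableTopology X] [T2Space X] {K : Set X} (hK : IsCompact K)
    {m : X → ℂ} (hm : IntegrableOn m K μ) {κ : X → E} (hκ : Continuous κ) :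
    ∃ R ∈ (finiteRankOperators ℂ E E).topologicalClosure,
      ∀ u v : E, ⟪v, R u⟫_ℂ = ∫ x in K, m x * (⟪κ x, u⟫_ℂ * conj ⟪κ x, v⟫_ℂ) ∂μ := by
  have hcont : Continuous fun x => InnerProductSpace.rankOne ℂ (κ x) (κ x) :=
    (ContinuousLinearMap.smulRightL ℂ E E).continuous₂.comp
      (((innerSL ℂ).continuous.comp hκ).prodMk hκ)
  refine ⟨∫ x in K, m x • InnerProductSpace.rankOne ℂ (κ x) (κ x) ∂μ, ?_,
    inner_integral_smul_rankOne (hm.smul_continuousOn hcont.continuousOn hK)⟩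
  exact integral_mem_topologicalClosure _ fun x =>
    Submodule.smul_mem _ _ (rankOne_mem_finiteRankOperators (κ x) (κ x))

end Operators

/-- `M` is the symbol of an elliptic Fourier multiplier `H^{-s} → H^s` with principal part
`c ⟨ξ⟩^{-2s}`; locally, `M` may have integrable singularities. -/
structure IsEllipticSymbol (s : ℝ) (c : ℂ) (M : R2 → ℂ) : Prop where
  ne_zero : c ≠ 0
  locallyIntegrable : LocallyIntegrable M
  tendsto : Tendsto (fun ξ => (sobolevWeight s ξ : ℂ) ^ 2 * M ξ) (cocompact R2) (𝓝 c)

/-- The operator `A` on the model of `H̃^{-s}(Γ)` represents the sesquilinear form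
`(f, g) ↦ ∫ M f̂ conj ĝ`. -/
def RepresentsMultiplier {s : ℝ} {Γ : Set R2} (M : R2 → ℂ)
    (A : sobolevModel s Γ →L[ℂ] sobolevModel s Γ) : Prop :=
  ∀ u v : sobolevModel s Γ,
    Integrable (fun ξ => M ξ * ((sobolevWeight s ξ * (u : PlaneL2) ξ) *
      conj (sobolevWeight s ξ * (v : PlaneL2) ξ))) ∧
    ⟪v, A u⟫_ℂ = ∫ ξ, M ξ * ((sobolevWeight s ξ * (u : PlaneL2) ξ) *
      conj (sobolevWeight s ξ * (v : PlaneL2) ξ))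

section EllipticSymbol

variable {s : ℝ} {c : ℂ} {M : R2 → ℂ} {K Γ : Set R2}

lemma RepresentsMultiplier.adjoint {A : sobolevModel s Γ →L[ℂ] sobolevModel s Γ}
    (hA : RepresentsMultiplier M A) :
    RepresentsMultiplier (fun ξ => conj (M ξ)) A.adjoint := by
  intro u v
  have hswap : (fun ξ => conj (M ξ) * ((sobolevWeight s ξ * (u : PlaneL2) ξ) *
      conj (sobolevWeight s ξ * (v : PlaneL2) ξ))) =
      fun ξ => conj (M ξ * ((sobolevWeight s ξ * (v : PlaneL2) ξ) *
        conj (sobolevWeight s ξ * (u : PlaneL2) ξ))) := by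
    ext ξ
    rw [map_mul conj (M ξ), map_mul conj (_ * _), conj_conj, mul_comm (conj (_ * _))]
  rw [hswap]
  refine ⟨(Complex.conjCLE : ℂ →L[ℝ] ℂ).integrable_comp (hA v u).1, ?_⟩
  rw [ContinuousLinearMap.adjoint_inner_right, ← inner_conj_symm, (hA v u).2, integral_conj]

lemma integrable_mul_conj (u v : PlaneL2) : Integrable fun ξ => u ξ * conj (v ξ) :=
  L2.integrable_inner (𝕜 := ℂ) v u

lemma inner_compression_mulLpTwo {a : R2 → ℂ} (ha : MemLp a ⊤) (W : Submodule ℂ PlaneL2)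
    [W.HasOrthogonalProjection] (u v : W) :
    ⟪v, compression W (mulLpTwo ha) u⟫_ℂ =
      ∫ ξ, a ξ * ((u : PlaneL2) ξ * conj ((v : PlaneL2) ξ)) := by
  rw [inner_compression, L2.inner_def]
  refine integral_congr_ae ((mulLpTwo_ae_eq ha u).mono fun ξ hξ => ?_)
  dsimp only
  rw [hξ, RCLike.inner_apply, mul_assoc]

lemma exists_inner_eq_integral_indicator_mul (hΓ : Bornology.IsBounded Γ) (hK : IsCompact K)
    {m : R2 → ℂ} (hm : IntegrableOn m K) (s : ℝ) :
    ∃ R ∈ (finiteRankOperators ℂ (sobolevModel s Γ) (sobolevModel s Γ)).topologicalClosure,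
      ∀ u v : sobolevModel s Γ,
        Integrable (fun ξ => K.indicator m ξ * ((sobolevWeight s ξ * (u : PlaneL2) ξ) *
          conj (sobolevWeight s ξ * (v : PlaneL2) ξ))) ∧
        ⟪v, R u⟫_ℂ = ∫ ξ, K.indicator m ξ * ((sobolevWeight s ξ * (u : PlaneL2) ξ) *
          conj (sobolevWeight s ξ * (v : PlaneL2) ξ)) := by
  obtain ⟨χ, hχ⟩ := exists_isCutoff hΓ
  have hT := hχ.isTestFunction
  let κ (ξ : R2) : sobolevModel s Γ :=
    (sobolevModel s Γ).orthogonalProjectionOnto (hT.cutoffKernel s ξ)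
  have hκ : Continuous κ :=
    (sobolevModel s Γ).orthogonalProjectionOnto.continuous.comp (hT.continuous_cutoffKernel s)
  have hinner (u : sobolevModel s Γ) (ξ : R2) : ⟪κ ξ, u⟫_ℂ = hT.localizedFT s u ξ :=
    Submodule.inner_orthogonalProjectionOnto_eq_of_mem_right u _
  obtain ⟨R, hRclosure, hR⟩ := exists_inner_eq_setIntegral_mul hK hm hκ
  refine ⟨R, hRclosure, fun u v => ?_⟩
  have hae : K.indicator (fun ξ => m ξ * (⟪κ ξ, u⟫_ℂ * conj ⟪κ ξ, v⟫_ℂ)) =ᵐ[volume]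
      fun ξ => K.indicator m ξ * ((sobolevWeight s ξ * (u : PlaneL2) ξ) *
        conj (sobolevWeight s ξ * (v : PlaneL2) ξ)) := by
    filter_upwards [hχ.localizedFT_ae_eq u.2, hχ.localizedFT_ae_eq v.2] with ξ hu hv
    rw [Set.indicator_mul_left, hinner, hinner, hu, hv]
  have hcont : Continuous fun ξ => ⟪κ ξ, u⟫_ℂ * conj ⟪κ ξ, v⟫_ℂ :=
    (hκ.inner continuous_const).mul
      (Complex.continuous_conj.comp (hκ.inner continuous_const))
  have hint : IntegrableOn (fun ξ => m ξ * (⟪κ ξ, u⟫_ℂ * conj ⟪κ ξ, v⟫_ℂ)) K :=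
    hm.mul_continuousOn hcont.continuousOn hK
  refine ⟨(hint.integrable_indicator hK.measurableSet).congr hae, ?_⟩
  rw [hR, ← integral_congr_ae hae, integral_indicator hK.measurableSet]

namespace IsEllipticSymbol

lemma exists_isCompact (hM : IsEllipticSymbol s c M) :
    ∃ K, IsCompact K ∧ ∀ ξ ∉ K, ‖(sobolevWeight s ξ : ℂ) ^ 2 * M ξ - c‖ ≤ ‖c‖ / 2 := by
  have hev : ∀ᶠ ξ in cocompact R2, ‖(sobolevWeight s ξ : ℂ) ^ 2 * M ξ - c‖ < ‖c‖ / 2 := by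
    simpa only [dist_eq_norm] using
      Metric.tendsto_nhds.1 hM.tendsto _ (half_pos (norm_pos_iff.2 hM.ne_zero))
  obtain ⟨K, hK, hsub⟩ := mem_cocompact.1 hev
  exact ⟨K, hK, fun ξ hξ => (hsub hξ).le⟩

open scoped Classical in
lemma norm_piecewise_sub_le
    (hK : ∀ ξ ∉ K, ‖(sobolevWeight s ξ : ℂ) ^ 2 * M ξ - c‖ ≤ ‖c‖ / 2) (ξ : R2) :
    ‖K.piecewise (fun _ => c) (fun ξ => (sobolevWeight s ξ : ℂ) ^ 2 * M ξ) ξ - c‖ ≤ ‖c‖ / 2 := by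
  by_cases hξ : ξ ∈ K
  · rw [Set.piecewise_eq_of_mem _ _ _ hξ, sub_self, norm_zero]
    positivity
  · rw [Set.piecewise_eq_of_notMem _ _ _ hξ]
    exact hK ξ hξ

open scoped Classical in
lemma memLp_top_piecewise (hM : IsEllipticSymbol s c M) (hKm : MeasurableSet K)
    (hK : ∀ ξ ∉ K, ‖(sobolevWeight s ξ : ℂ) ^ 2 * M ξ - c‖ ≤ ‖c‖ / 2) :
    MemLp (K.piecewise (fun _ => c) fun ξ => (sobolevWeight s ξ : ℂ) ^ 2 * M ξ) ⊤ := by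
  have hcont : Continuous fun ξ : R2 => (sobolevWeight s ξ : ℂ) ^ 2 := by fun_prop
  have hmeas : AEStronglyMeasurable fun ξ => (sobolevWeight s ξ : ℂ) ^ 2 * M ξ :=
    hcont.aestronglyMeasurable.mul hM.locallyIntegrable.aestronglyMeasurable
  refine memLp_top_of_bound
    (aestronglyMeasurable_const.piecewise hKm hmeas.restrict) (‖c‖ + ‖c‖ / 2)
    (ae_of_all _ fun ξ => ?_)
  exact (norm_le_norm_add_norm_sub' _ c).trans (by gcongr; exact norm_piecewise_sub_le hK ξ)

lemma integrableOn_sub_sobolevWeight (hM : IsEllipticSymbol s c M) (hK : IsCompact K) :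
    IntegrableOn (fun ξ => M ξ - c * (sobolevWeight (-s) ξ : ℂ) ^ 2) K := by
  have hcont : Continuous fun ξ : R2 => c * (sobolevWeight (-s) ξ : ℂ) ^ 2 := by fun_prop
  exact (hM.locallyIntegrable.integrableOn_isCompact hK).sub
    (hcont.continuousOn.integrableOn_compact hK)

open scoped Classical in
lemma mul_eq_piecewise_add_indicator (M : R2 → ℂ) (c : ℂ) (s : ℝ) (K : Set R2) (ξ : R2) (a b : ℂ) :
    M ξ * ((sobolevWeight s ξ * a) * conj (sobolevWeight s ξ * b)) =
      K.piecewise (fun _ => c) (fun ξ => (sobolevWeight s ξ : ℂ) ^ 2 * M ξ) ξ * (a * conj b) +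
      K.indicator (fun ξ => M ξ - c * (sobolevWeight (-s) ξ : ℂ) ^ 2) ξ *
        ((sobolevWeight s ξ * a) * conj (sobolevWeight s ξ * b)) := by
  rw [map_mul, Complex.conj_ofReal]
  by_cases hξ : ξ ∈ K
  · rw [Set.piecewise_eq_of_mem _ _ _ hξ, Set.indicator_of_mem hξ]
    linear_combination c * a * conj b * (1 + (sobolevWeight s ξ : ℂ) * sobolevWeight (-s) ξ) *
      ofReal_sobolevWeight_mul_neg s ξ
  · rw [Set.piecewise_eq_of_notMem _ _ _ hξ, Set.indicator_of_notMem hξ]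
    ring

/-- Outside a compact set the symbol is close to `c ⟨ξ⟩^{-2s}`, which gives an invertible
compression; inside, only integrability matters. -/
theorem exists_representsMultiplier (hM : IsEllipticSymbol s c M) (hΓ : Bornology.IsBounded Γ) :
    ∃ A R : sobolevModel s Γ →L[ℂ] sobolevModel s Γ, RepresentsMultiplier M A ∧ IsUnit (A - R) ∧
      R ∈ (finiteRankOperators ℂ (sobolevModel s Γ) (sobolevModel s Γ)).topologicalClosure := by
  classical
  obtain ⟨K, hK, hle⟩ := hM.exists_isCompact
  have ha := hM.memLp_top_piecewise hK.measurableSet hle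
  obtain ⟨R, hRclosure, hR⟩ := exists_inner_eq_integral_indicator_mul hΓ hK
    (hM.integrableOn_sub_sobolevWeight hK) s
  have hunit : IsUnit (compression (sobolevModel s Γ) (mulLpTwo ha)) := by
    refine isUnit_compression _ ((norm_mulLpTwo_sub_smul_one_le ha (by positivity)
      (ae_of_all _ (norm_piecewise_sub_le hle))).trans_lt ?_)
    exact half_lt_self (norm_pos_iff.2 hM.ne_zero)
  refine ⟨compression (sobolevModel s Γ) (mulLpTwo ha) + R, R, fun u v => ?_,
    by rwa [add_sub_cancel_right], hRclosure⟩
  have haint : Integrable fun ξ => K.piecewise (fun _ => c)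
      (fun ξ => (sobolevWeight s ξ : ℂ) ^ 2 * M ξ) ξ * ((u : PlaneL2) ξ * conj ((v : PlaneL2) ξ)) :=
    (integrable_mul_conj (u : PlaneL2) (v : PlaneL2)).mul_of_top_right ha
  obtain ⟨hRint, hRinner⟩ := hR u v
  simp only [mul_eq_piecewise_add_indicator M c s K]
  refine ⟨haint.add hRint, ?_⟩
  rw [add_apply, inner_add_right, inner_compression_mulLpTwo, hRinner, integral_add haint hRint]

end IsEllipticSymbol

end EllipticSymbol

/-! ### From the model to distributions -/

section Distributions

variable {s : ℝ} {Γ : Set R2} {M F : R2 → ℂ}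

lemma memHs_iff : MemHs s F ↔
    AEStronglyMeasurable F ∧ MemLp (fun ξ => (sobolevWeight s ξ : ℂ) * F ξ) 2 := by
  have hcont : Continuous fun ξ : R2 => (sobolevWeight s ξ : ℂ) := by fun_prop
  refine and_congr_right fun hF => ?_
  have hmeas : AEStronglyMeasurable fun ξ => (sobolevWeight s ξ : ℂ) * F ξ :=
    hcont.aestronglyMeasurable.mul hF
  rw [memLp_two_iff_integrable_sq_norm hmeas]
  simp only [norm_mul, norm_ofReal_sobolevWeight, mul_pow, sobolevWeight_sq]

lemma memHs_zero : MemHs s fun _ => 0 :=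
  memHs_iff.2 ⟨aestronglyMeasurable_const, by simp only [mul_zero, MemLp.zero']⟩

lemma toLp_sobolevWeight_neg_mul_ae_eq (hF : MemHs (-s) F) :
    (fun ξ => sobolevWeight s ξ * (memHs_iff.1 hF).2.toLp _ ξ) =ᵐ[volume] F := by
  filter_upwards [(memHs_iff.1 hF).2.coeFn_toLp] with ξ hξ
  rw [hξ, ← mul_assoc, ofReal_sobolevWeight_mul_neg, one_mul]

lemma eq_of_sobolevWeight_mul_ae_eq {u v : PlaneL2} (h : (fun ξ => (sobolevWeight s ξ : ℂ) * u ξ)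
    =ᵐ[volume] fun ξ => sobolevWeight s ξ * v ξ) : u = v :=
  Lp.ext (h.mono fun ξ hξ => mul_left_cancel₀ (ofReal_sobolevWeight_ne_zero s ξ) hξ)

namespace HTildeElt

lemma memHs_ft (ψ : HTildeElt s Γ) : MemHs s ψ.ft :=
  ⟨ψ.cont.aestronglyMeasurable, ψ.mem⟩

/-- The vector `⟨·⟩^{-s} ψ̂` representing `ψ` in the `L²` model of `H̃^{-s}(Γ)`. -/
def model (ψ : HTildeElt (-s) Γ) : sobolevModel s Γ where
  val := (memHs_iff.1 ψ.memHs_ft).2.toLp _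
  property := by
    refine mem_sobolevModel.2 fun φ hφ hd => ?_
    rw [← ψ.supp φ hφ.1 hφ.2 hd]
    exact integral_congr_ae
      ((toLp_sobolevWeight_neg_mul_ae_eq ψ.memHs_ft).mul (ae_eq_refl (testFT φ)))

lemma sobolevWeight_mul_model_ae_eq (ψ : HTildeElt (-s) Γ) :
    (fun ξ => sobolevWeight s ξ * (ψ.model : PlaneL2) ξ) =ᵐ[volume] ψ.ft :=
  toLp_sobolevWeight_neg_mul_ae_eq ψ.memHs_ft

lemma model_surjective (hΓ : Bornology.IsBounded Γ) :
    Function.Surjective (model : HTildeElt (-s) Γ → sobolevModel s Γ) := by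
  intro u
  obtain ⟨χ, hχ⟩ := exists_isCutoff hΓ
  have hft := hχ.localizedFT_ae_eq u.2
  have hcont := hχ.isTestFunction.continuous_localizedFT s u
  have hmem : MemHs (-s) (hχ.isTestFunction.localizedFT s u) := by
    refine memHs_iff.2 ⟨hcont.aestronglyMeasurable, (Lp.memLp (u : PlaneL2)).ae_eq ?_⟩
    filter_upwards [hft] with ξ hξ
    rw [hξ, ← mul_assoc, mul_comm (sobolevWeight (-s) ξ : ℂ), ofReal_sobolevWeight_mul_neg,
      one_mul]
  let ψ : HTildeElt (-s) Γ :=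
    { ft := hχ.isTestFunction.localizedFT s u
      cont := hcont
      mem := hmem.2
      supp := fun φ hφ hφ' hd => by
        rw [← mem_sobolevModel.1 u.2 φ ⟨hφ, hφ'⟩ hd]
        exact integral_congr_ae (hft.mul (ae_eq_refl (testFT φ))) }
  exact ⟨ψ, Subtype.ext (eq_of_sobolevWeight_mul_ae_eq
    (ψ.sobolevWeight_mul_model_ae_eq.trans hft))⟩

section Sum

variable {ι : Type*} [Fintype ι] (c : ι → ℂ) (e : ι → HTildeElt (-s) Γ)

lemma sobolevWeight_mul_sum_smul_model_ae_eq :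
    (fun ξ => sobolevWeight s ξ * ((∑ i, c i • (e i).model : sobolevModel s Γ) : PlaneL2) ξ)
      =ᵐ[volume] fun ξ => ∑ i, c i * (e i).ft ξ := by
  have hsmul : ∀ᵐ ξ : R2, ∀ i, (c i • ((e i).model : PlaneL2)) ξ = c i * (e i).model.1 ξ :=
    ae_all_iff.2 fun i => Lp.coeFn_smul _ _
  have hmodel : ∀ᵐ ξ : R2, ∀ i, sobolevWeight s ξ * (e i).model.1 ξ = (e i).ft ξ :=
    ae_all_iff.2 fun i => (e i).sobolevWeight_mul_model_ae_eq
  have hsum := Lp.coeFn_finsetSum Finset.univ fun i => c i • ((e i).model : PlaneL2)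
  filter_upwards [hsmul, hmodel, hsum] with ξ hsmul hmodel hsum
  simp only [Submodule.coe_sum, Submodule.coe_smul, hsum, Finset.sum_apply, hsmul,
    Finset.mul_sum, mul_left_comm _ (c _), hmodel]

lemma continuous_sum_mul_ft : Continuous fun ξ => ∑ i, c i * (e i).ft ξ :=
  continuous_finsetSum _ fun i _ => continuous_const.mul (e i).cont

lemma sum_smul_model_eq_zero_iff :
    ∑ i, c i • (e i).model = 0 ↔ ∀ ξ, ∑ i, c i * (e i).ft ξ = 0 := by
  have hae := sobolevWeight_mul_sum_smul_model_ae_eq c e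
  have hzero : (fun ξ => (sobolevWeight s ξ : ℂ) * (0 : PlaneL2) ξ) =ᵐ[volume] fun _ => 0 := by
    filter_upwards [Lp.coeFn_zero ℂ 2 (volume : Measure R2)] with ξ hξ
    rw [hξ, Pi.zero_apply, mul_zero]
  rw [← funext_iff (g := fun _ => 0), ← Continuous.ae_eq_iff_eq volume (continuous_sum_mul_ft c e)
    continuous_const]
  refine ⟨fun h => ?_, fun h => Subtype.ext (eq_of_sobolevWeight_mul_ae_eq
    ((hae.trans h).trans hzero.symm))⟩
  rw [h] at hae
  exact hae.symm.trans hzero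

lemma model_eq_sum_smul_model_iff (ψ : HTildeElt (-s) Γ) :
    ψ.model = ∑ i, c i • (e i).model ↔ ∀ ξ, ψ.ft ξ = ∑ i, c i * (e i).ft ξ := by
  have hae := sobolevWeight_mul_sum_smul_model_ae_eq c e
  rw [← funext_iff, ← Continuous.ae_eq_iff_eq volume ψ.cont (continuous_sum_mul_ft c e)]
  refine ⟨fun h => ?_, fun h => Subtype.ext (eq_of_sobolevWeight_mul_ae_eq
    ((ψ.sobolevWeight_mul_model_ae_eq.trans h).trans hae.symm))⟩
  rw [← h] at hae
  exact ψ.sobolevWeight_mul_model_ae_eq.symm.trans hae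

end Sum

end HTildeElt

/-- The vector representing the antilinear functional `ψ ↦ ∫ F conj ψ̂` on the model of
`H̃^{-s}(Γ)`, for `F` the Fourier transform of an element of `H^s(ℝ²)`. -/
def dualVector (Γ : Set R2) (hF : MemHs s F) : sobolevModel s Γ :=
  (sobolevModel s Γ).orthogonalProjectionOnto ((memHs_iff.1 hF).2.toLp _)

lemma integrable_mul_conj_and_inner_dualVector (hF : MemHs s F) (v : sobolevModel s Γ) :
    Integrable (fun ξ => F ξ * conj (sobolevWeight s ξ * (v : PlaneL2) ξ)) ∧
      ⟪v, dualVector Γ hF⟫_ℂ = ∫ ξ, F ξ * conj (sobolevWeight s ξ * (v : PlaneL2) ξ) := by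
  have hae : (fun ξ => (memHs_iff.1 hF).2.toLp _ ξ * conj ((v : PlaneL2) ξ)) =ᵐ[volume]
      fun ξ => F ξ * conj (sobolevWeight s ξ * (v : PlaneL2) ξ) := by
    filter_upwards [(memHs_iff.1 hF).2.coeFn_toLp] with ξ hξ
    rw [hξ, map_mul, Complex.conj_ofReal]
    ring
  refine ⟨(integrable_mul_conj _ _).congr hae, ?_⟩
  rw [dualVector, Submodule.inner_orthogonalProjectionOnto_eq_of_mem_left v, L2.inner_def,
    ← integral_congr_ae hae]
  simp only [RCLike.inner_apply]

lemma dualVector_zero : dualVector Γ (memHs_zero (s := s)) = 0 := by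
  refine ext_inner_left ℂ fun v => ?_
  simp only [(integrable_mul_conj_and_inner_dualVector memHs_zero v).2, zero_mul, integral_zero,
    inner_zero_right]

lemma dualPair_eq_zero_iff (hF : MemHs s F) (ψ : HTildeElt (-s) Γ) :
    dualPair F ψ.ft = 0 ↔ ⟪ψ.model, dualVector Γ hF⟫_ℂ = 0 := by
  have hpi : ((((2 * π) ^ 2)⁻¹ : ℝ) : ℂ) ≠ 0 := by
    rw [Complex.ofReal_ne_zero]
    positivity
  rw [dualPair, mul_eq_zero, or_iff_right hpi, (integrable_mul_conj_and_inner_dualVector hF _).2]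
  refine Eq.congr_left (integral_congr_ae ?_)
  filter_upwards [ψ.sobolevWeight_mul_model_ae_eq] with ξ hξ
  rw [hξ]

lemma agreeOn_iff_apply_model_eq (hb : Bornology.IsBounded Γ) (ho : IsOpen Γ)
    (hseg : HasSegmentProperty Γ) {A : sobolevModel s Γ →L[ℂ] sobolevModel s Γ}
    (hA : RepresentsMultiplier M A) (hF : MemHs s F) (ψ : HTildeElt (-s) Γ) :
    AgreeOn Γ (fun ξ => M ξ * ψ.ft ξ) F ↔ A ψ.model = dualVector Γ hF := by
  have hpair {φ : R2 → ℂ} (hφ : IsTestFunction φ) (hsupp : tsupport φ ⊆ Γ) :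
      ∫ ξ, (M ξ * ψ.ft ξ - F ξ) * testFT φ ξ =
        ⟪hφ.testVector (-s), (A ψ.model - dualVector Γ hF : sobolevModel s Γ)⟫_ℂ := by
    let v : sobolevModel s Γ := ⟨_, hφ.testVector_neg_mem_sobolevModel hsupp⟩
    obtain ⟨hAint, hAinner⟩ := hA ψ.model v
    obtain ⟨hFint, hFinner⟩ := integrable_mul_conj_and_inner_dualVector hF v
    calc ∫ ξ, (M ξ * ψ.ft ξ - F ξ) * testFT φ ξ
        = ∫ ξ, (M ξ * ((sobolevWeight s ξ * (ψ.model : PlaneL2) ξ) *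
              conj (sobolevWeight s ξ * (v : PlaneL2) ξ)) -
            F ξ * conj (sobolevWeight s ξ * (v : PlaneL2) ξ)) := by
          refine integral_congr_ae ?_
          filter_upwards [ψ.sobolevWeight_mul_model_ae_eq,
            IsTestFunction.sobolevWeight_mul_testVector_neg_ae_eq hφ s] with ξ hψ hv
          rw [hψ, hv, Complex.conj_conj]
          ring
      _ = ⟪v, A ψ.model - dualVector Γ hF⟫_ℂ := by
          rw [integral_sub hAint hFint, inner_sub_right, hAinner, hFinner]
  rw [← sub_eq_zero]
  refine ⟨fun hagree => ?_, fun hzero φ hφ hφ' hsupp => ?_⟩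
  · refine Subtype.ext (inner_self_eq_zero (𝕜 := ℂ).1 ?_)
    refine (Submodule.mem_orthogonal _ _).1 ?_ _ (SetLike.coe_mem _)
    refine (mem_orthogonal_sobolevModel_iff hb ho hseg).2 fun φ hφ hsupp => ?_
    rw [← hpair hφ hsupp, hagree φ hφ.1 hφ.2 hsupp]
  · rw [hpair ⟨hφ, hφ'⟩ hsupp, hzero, Submodule.coe_zero, inner_zero_right]

lemma agreeOn_zero_iff_mem_ker (hb : Bornology.IsBounded Γ) (ho : IsOpen Γ)
    (hseg : HasSegmentProperty Γ) {A : sobolevModel s Γ →L[ℂ] sobolevModel s Γ}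
    (hA : RepresentsMultiplier M A) (ψ : HTildeElt (-s) Γ) :
    AgreeOn Γ (fun ξ => M ξ * ψ.ft ξ) (fun _ => 0) ↔ ψ.model ∈ A.ker := by
  rw [agreeOn_iff_apply_model_eq hb ho hseg hA memHs_zero, dualVector_zero]
  rfl

end Distributions

/-! ### The Fredholm alternative for elliptic multipliers -/

section Alternative

variable {s : ℝ} {Γ : Set R2} {M : R2 → ℂ}

/-- The elements `e i` of `H̃^r(Γ)` form a basis of the kernel of the operator which applies the
Fourier multiplier `M` and restricts to `Γ`. -/
structure IsKernelBasis {r : ℝ} {n : ℕ} (Γ : Set R2) (M : R2 → ℂ)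
    (e : Fin n → HTildeElt r Γ) : Prop where
  agreeOn_zero : ∀ i, AgreeOn Γ (fun ξ => M ξ * (e i).ft ξ) fun _ => 0
  eq_zero_of_sum_eq_zero : ∀ c : Fin n → ℂ, (∀ ξ, ∑ i, c i * (e i).ft ξ = 0) → c = 0
  exists_eq_sum : ∀ ψ : HTildeElt r Γ, AgreeOn Γ (fun ξ => M ξ * ψ.ft ξ) (fun _ => 0) →
    ∃ c : Fin n → ℂ, ∀ ξ, ψ.ft ξ = ∑ i, c i * (e i).ft ξ

lemma RepresentsMultiplier.isKernelBasis {A : sobolevModel s Γ →L[ℂ] sobolevModel s Γ}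
    (hA : RepresentsMultiplier M A) (hb : Bornology.IsBounded Γ) (ho : IsOpen Γ)
    (hseg : HasSegmentProperty Γ) {n : ℕ} {e : Fin n → HTildeElt (-s) Γ}
    (hli : LinearIndependent ℂ fun i => (e i).model)
    (hspan : Submodule.span ℂ (Set.range fun i => (e i).model) = A.ker) :
    IsKernelBasis Γ M e where
  agreeOn_zero i := by
    rw [agreeOn_zero_iff_mem_ker hb ho hseg hA, ← hspan]
    exact Submodule.subset_span ⟨i, rfl⟩
  eq_zero_of_sum_eq_zero c hc :=
    funext (Fintype.linearIndependent_iff.1 hli c ((HTildeElt.sum_smul_model_eq_zero_iff c e).2 hc))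
  exists_eq_sum ψ hψ := by
    rw [agreeOn_zero_iff_mem_ker hb ho hseg hA, ← hspan,
      Submodule.mem_span_range_iff_exists_fun] at hψ
    obtain ⟨c, hc⟩ := hψ
    exact ⟨c, (HTildeElt.model_eq_sum_smul_model_iff c e ψ).1 hc.symm⟩

theorem statement16_general {c : ℂ} (hb : Bornology.IsBounded Γ) (ho : IsOpen Γ)
    (hseg : HasSegmentProperty Γ) (hM : IsEllipticSymbol s c M) :
    ∃ n : ℕ, ∃ e e' : Fin n → HTildeElt (-s) Γ,
      IsKernelBasis Γ M e ∧ IsKernelBasis Γ (fun ξ => conj (M ξ)) e' ∧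
      ∀ F : R2 → ℂ, MemHs s F →
        ((∃ ψ : HTildeElt (-s) Γ, AgreeOn Γ (fun ξ => M ξ * ψ.ft ξ) F) ↔
          ∀ i, dualPair F (e' i).ft = 0) := by
  obtain ⟨A, R, hA, hunit, hR⟩ := hM.exists_representsMultiplier hb
  obtain ⟨n, v, v', ⟨hli, hspan⟩, ⟨hli', hspan'⟩, hrange⟩ := exists_fredholmAlternative hunit hR
  choose e he using fun i => HTildeElt.model_surjective hb (v i)
  choose e' he' using fun i => HTildeElt.model_surjective hb (v' i)
  obtain rfl := funext he
  obtain rfl := funext he'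
  refine ⟨n, e, e', hA.isKernelBasis hb ho hseg hli hspan,
    hA.adjoint.isKernelBasis hb ho hseg hli' hspan', fun F hF => ?_⟩
  simp only [agreeOn_iff_apply_model_eq hb ho hseg hA hF, dualPair_eq_zero_iff hF, ← hrange]
  exact ((HTildeElt.model_surjective hb).exists (p := fun u => A u = dualVector Γ hF)).symm

end Alternative

/-! ### The Helmholtz multiplier -/

section LocallyIntegrable

lemma locallyIntegrable_comp_norm {E : Type*} [NormedAddCommGroup E] [NormedSpace ℝ E]
    [FiniteDimensional ℝ E] [Nontrivial E] [MeasurableSpace E] [BorelSpace E] {μ : Measure E}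
    [μ.IsAddHaarMeasure] {f : ℝ → ℝ} (hf : LocallyIntegrable f) :
    LocallyIntegrable (fun x : E => f ‖x‖) μ := by
  intro x
  refine ⟨Metric.ball 0 (‖x‖ + 1), Metric.isOpen_ball.mem_nhds (by simp), ?_⟩
  rw [integrableOn_fun_norm_addHaar]
  exact ((hf.integrableOn_isCompact isCompact_Icc).continuousOn_mul (by fun_prop)
    isCompact_Icc).mono_set Set.Ioo_subset_Icc_self

lemma locallyIntegrable_abs_sub_rpow_neg {r : ℝ} (hr : r < 1) (a : ℝ) :
    LocallyIntegrable fun x : ℝ => |x - a| ^ (-r) := by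
  have h : LocallyIntegrable fun x : ℝ => |x| ^ (-r) := by
    have hmeas : Measurable fun x : ℝ => |x| ^ (-r) := by fun_prop
    refine locallyIntegrable_of_norm_le_rpow (C := 1) (α := r) (by simp) (by simpa using hr)
      (ae_of_all _ fun x => ?_) hmeas.aestronglyMeasurable
    rw [one_mul, Real.norm_of_nonneg (by positivity), Real.norm_eq_abs]
  rw [← (measurePreserving_sub_right volume a).map_eq] at h
  exact (locallyIntegrable_map_homeomorph (Homeomorph.subRight a)).1 h

end LocallyIntegrable

section Helmholtz

variable {k : ℝ}

lemma measurable_mT (k : ℝ) : Measurable (mT k) := by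
  have hroot : Measurable (rootk k) :=
    Measurable.ite (measurableSet_lt measurable_norm measurable_const) (by fun_prop) (by fun_prop)
  exact measurable_const.div (measurable_const.mul hroot)

lemma norm_mT (hk : 0 ≤ k) (ξ : R2) : ‖mT k ξ‖ = 1 / 2 * (√|‖ξ‖ ^ 2 - k ^ 2|)⁻¹ := by
  have hroot : ‖rootk k ξ‖ = √|‖ξ‖ ^ 2 - k ^ 2| := by
    rw [rootk]
    split_ifs with h
    · have : ‖ξ‖ ^ 2 ≤ k ^ 2 := by gcongr
      rw [Complex.norm_real, Real.norm_of_nonneg (Real.sqrt_nonneg _), abs_sub_comm,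
        abs_of_nonneg (sub_nonneg.2 this)]
    · have : k ^ 2 ≤ ‖ξ‖ ^ 2 := by gcongr; exact not_lt.1 h
      rw [norm_mul, Complex.norm_I, one_mul, Complex.norm_real,
        Real.norm_of_nonneg (Real.sqrt_nonneg _), abs_of_nonneg (sub_nonneg.2 this)]
  rw [mT, norm_div, Complex.norm_I, norm_mul, hroot, Complex.norm_ofNat, one_div, one_div, mul_inv]

lemma norm_mT_le (hk : 0 < k) (ξ : R2) :
    ‖mT k ξ‖ ≤ (√k)⁻¹ * |‖ξ‖ - k| ^ (-(1 / 2) : ℝ) := by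
  have hfactor : |‖ξ‖ ^ 2 - k ^ 2| = (‖ξ‖ + k) * |‖ξ‖ - k| := by
    rw [sq_sub_sq, abs_mul, abs_of_pos (by positivity : 0 < ‖ξ‖ + k)]
  rw [norm_mT hk.le, hfactor, Real.sqrt_mul (by positivity), mul_inv,
    Real.rpow_neg (abs_nonneg _), ← Real.sqrt_eq_rpow, ← mul_assoc]
  gcongr
  calc 1 / 2 * (√(‖ξ‖ + k))⁻¹ ≤ 1 * (√k)⁻¹ := by
        gcongr
        · norm_num
        · exact le_add_of_nonneg_left (norm_nonneg ξ)
    _ = (√k)⁻¹ := one_mul _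

lemma locallyIntegrable_mT (hk : 0 < k) : LocallyIntegrable (mT k) := by
  have h : LocallyIntegrable fun ξ : R2 => |‖ξ‖ - k| ^ (-(1 / 2) : ℝ) :=
    locallyIntegrable_comp_norm (locallyIntegrable_abs_sub_rpow_neg one_half_lt_one k)
  exact (h.smul (√k)⁻¹).mono (measurable_mT k).aestronglyMeasurable
    (ae_of_all _ fun ξ => (norm_mT_le hk ξ).trans (le_abs_self _))

lemma sobolevWeight_half_sq_mul_mT {ξ : R2} (h : k < ‖ξ‖) :
    (sobolevWeight (1 / 2) ξ : ℂ) ^ 2 * mT k ξ =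
      ((1 / 2 * √((1 + ‖ξ‖ ^ 2) / (‖ξ‖ ^ 2 - k ^ 2)) : ℝ) : ℂ) := by
  rw [← Complex.ofReal_pow, sobolevWeight_sq, ← Real.sqrt_eq_rpow, mT, rootk,
    if_neg h.not_gt, Real.sqrt_div (by positivity), mul_left_comm, div_mul_cancel_left₀ I_ne_zero]
  push_cast
  ring

lemma tendsto_sobolevWeight_half_sq_mul_mT (k : ℝ) :
    Tendsto (fun ξ => (sobolevWeight (1 / 2) ξ : ℂ) ^ 2 * mT k ξ) (cocompact R2)
      (𝓝 (1 / 2 : ℂ)) := by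
  have hlim : Tendsto (fun x : ℝ => (1 + x ^ 2) / (x ^ 2 - k ^ 2)) atTop (𝓝 1) := by
    have hden : Tendsto (fun x : ℝ => x ^ 2 - k ^ 2) atTop atTop :=
      tendsto_atTop_add_const_right _ _ (tendsto_pow_atTop two_ne_zero)
    have h := (hden.const_div_atTop (1 + k ^ 2)).const_add 1
    rw [add_zero] at h
    refine h.congr' ?_
    filter_upwards [hden.eventually_gt_atTop 0] with x hx
    field_simp
    ring
  have h : Tendsto (fun x : ℝ => ((1 / 2 * √((1 + x ^ 2) / (x ^ 2 - k ^ 2)) : ℝ) : ℂ)) atTop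
      (𝓝 (1 / 2)) := by
    have h := (Complex.continuous_ofReal.tendsto _).comp (hlim.sqrt.const_mul (1 / 2))
    simp only [Real.sqrt_one, mul_one, Complex.ofReal_div, Complex.ofReal_one,
      Complex.ofReal_ofNat] at h
    exact h
  refine (h.comp (tendsto_norm_cocompact_atTop (E := R2))).congr' ?_
  filter_upwards [tendsto_norm_cocompact_atTop.eventually_gt_atTop k] with ξ hξ
  exact (sobolevWeight_half_sq_mul_mT hξ).symm

lemma isEllipticSymbol_mT (hk : 0 < k) : IsEllipticSymbol (1 / 2) (1 / 2) (mT k) where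
  ne_zero := by norm_num
  locallyIntegrable := locallyIntegrable_mT hk
  tendsto := tendsto_sobolevWeight_half_sq_mul_mT k

end Helmholtz

/-- Lemma A.2: the Helmholtz single-layer operator
`T : H̃^{-1/2}(Γ) → H^{1/2}(Γ)` (Fourier multiplier `mT k`) is Fredholm of index zero:
its kernel and the kernel of its adjoint (multiplier `conj ∘ mT k`) are spanned by the
same finite number `n` of linearly independent elements, and the range of `T` is
exactly the annihilator of the adjoint kernel (hence closed, of codimension `n`). -/
theorem statement16 (Γ : Set R2) (hΓ : IsLipschitzDomain Γ) (k : ℝ) (hk : 0 < k) :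
    ∃ n : ℕ, ∃ e e' : Fin n → HTildeElt (-(1/2) : ℝ) Γ,
      (∀ i, AgreeOn Γ (fun ξ => mT k ξ * (e i).ft ξ) (fun _ => 0)) ∧
      (∀ c : Fin n → ℂ, (∀ ξ : R2, ∑ i, c i * (e i).ft ξ = 0) → c = 0) ∧
      (∀ ψ : HTildeElt (-(1/2) : ℝ) Γ,
        AgreeOn Γ (fun ξ => mT k ξ * ψ.ft ξ) (fun _ => 0) →
        ∃ c : Fin n → ℂ, ∀ ξ : R2, ψ.ft ξ = ∑ i, c i * (e i).ft ξ) ∧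
      (∀ i, AgreeOn Γ (fun ξ => starRingEnd ℂ (mT k ξ) * (e' i).ft ξ) (fun _ => 0)) ∧
      (∀ c : Fin n → ℂ, (∀ ξ : R2, ∑ i, c i * (e' i).ft ξ = 0) → c = 0) ∧
      (∀ χ : HTildeElt (-(1/2) : ℝ) Γ,
        AgreeOn Γ (fun ξ => starRingEnd ℂ (mT k ξ) * χ.ft ξ) (fun _ => 0) →
        ∃ c : Fin n → ℂ, ∀ ξ : R2, χ.ft ξ = ∑ i, c i * (e' i).ft ξ) ∧
      (∀ F : R2 → ℂ, MemHs (1/2) F →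
        ((∃ ψ : HTildeElt (-(1/2) : ℝ) Γ, AgreeOn Γ (fun ξ => mT k ξ * ψ.ft ξ) F) ↔
          (∀ i, dualPair F (e' i).ft = 0))) := by
  obtain ⟨n, e, e', he, he', hrange⟩ := statement16_general hΓ.2.1 hΓ.1 hΓ.hasSegmentProperty
    (isEllipticSymbol_mT hk)
  exact ⟨n, e, e', he.agreeOn_zero, he.eq_zero_of_sum_eq_zero, he.exists_eq_sum,
    he'.agreeOn_zero, he'.eq_zero_of_sum_eq_zero, he'.exists_eq_sum, hrange⟩

end
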